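/- arXiv:2102.12025 — 3 statements merged into one kernel-verified Lean document; each statement's English description precedes it below -/
import Mathlib

section
/- Let L > 0 and ℓ, k, k₀, b > 0. There exists a constant β > 0, depending only on L, ℓ, k, k₀, b, such that for all φ, ψ, w ∈ C¹([0,L]) with φ(0) = φ(L) = ψ(0) = ψ(L) = w(0) = w(L) = 0: ∫₀^L (|φ_x|² + |ψ_x|² + |w_x|²) dx ≤ β [ b∫₀^L |ψ_x|² dx + k∫₀^L |φ_x + ψ + ℓw|² dx + k₀∫₀^L |w_x − ℓφ|² dx ]. -/
/-!
With `u = (φ, ψ, w)` the right-hand side controls the `L²` norm of `u' - A u` for a constant matrix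
`A`, that is, of the source of a linear ODE solved by `u`. As `u` vanishes at `0`, Grönwall's
inequality for `‖u‖²` bounds `u` uniformly by that source, and then `u' = A u + (u' - A u)` is
bounded in `L²`.
-/

open Set MeasureTheory

section Gronwall

theorem le_exp_mul_add_integral_of_deriv_right_le {g g' h : ℝ → ℝ} {a b c : ℝ} (hab : a ≤ b)
    (hg : ContinuousOn g (Icc a b))
    (hg' : ∀ x ∈ Ioo a b, HasDerivWithinAt g (g' x) (Ioi x) x)
    (hh : IntervalIntegrable h volume a b)
    (bound : ∀ x ∈ Ioo a b, g' x ≤ c * g x + h x) :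
    g b ≤ Real.exp (c * (b - a)) * g a + ∫ x in a..b, Real.exp (c * (b - x)) * h x := by
  let G : ℝ → ℝ := fun x ↦ Real.exp (c * (b - x)) * g x
  have hexp : Continuous fun x ↦ Real.exp (c * (b - x)) := by fun_prop
  have hG' (x : ℝ) (hx : x ∈ Ioo a b) :
      HasDerivWithinAt G (Real.exp (c * (b - x)) * (g' x - c * g x)) (Ioi x) x := by
    have hexp' : HasDerivAt (fun x ↦ Real.exp (c * (b - x))) (Real.exp (c * (b - x)) * -c) x := by
      simpa using (((hasDerivAt_id x).const_sub b).const_mul c).exp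
    exact (hexp'.hasDerivWithinAt.mul (hg' x hx)).congr_deriv (by ring)
  have hGh (x : ℝ) (hx : x ∈ Ioo a b) :
      Real.exp (c * (b - x)) * (g' x - c * g x) ≤ Real.exp (c * (b - x)) * h x := by
    gcongr
    linarith [bound x hx]
  have hint : IntegrableOn (fun x ↦ Real.exp (c * (b - x)) * h x) (Icc a b) :=
    (intervalIntegrable_iff_integrableOn_Icc_of_le hab).1 (hh.continuousOn_mul hexp.continuousOn)
  have hGb : G b - G a ≤ ∫ x in a..b, Real.exp (c * (b - x)) * h x :=
    intervalIntegral.sub_le_integral_of_hasDeriv_right_of_le hab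
      (hexp.continuousOn.mul hg) hG' hint hGh
  simp only [G, sub_self, mul_zero, Real.exp_zero, one_mul] at hGb
  linarith

variable {E : Type*} [NormedAddCommGroup E] [InnerProductSpace ℝ E]

theorem two_mul_inner_le_of_norm_le {u v : E} {K f : ℝ} (h : ‖v‖ ≤ K * ‖u‖ + f) :
    2 * inner ℝ u v ≤ (2 * K + 1) * ‖u‖ ^ 2 + f ^ 2 :=
  calc 2 * inner ℝ u v ≤ 2 * (‖u‖ * (K * ‖u‖ + f)) := by
        grw [real_inner_le_norm, h]
    _ = 2 * K * ‖u‖ ^ 2 + 2 * ‖u‖ * f := by ring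
    _ ≤ 2 * K * ‖u‖ ^ 2 + (‖u‖ ^ 2 + f ^ 2) := by grw [two_mul_le_add_sq ‖u‖ f]
    _ = (2 * K + 1) * ‖u‖ ^ 2 + f ^ 2 := by ring

variable {u u' : ℝ → E} {f : ℝ → ℝ} {a b K : ℝ}

theorem norm_sq_le_of_norm_deriv_right_le (hK : 0 ≤ K)
    (hu : ContinuousOn u (Icc a b))
    (hu' : ∀ x ∈ Ioo a b, HasDerivWithinAt u (u' x) (Ioi x) x)
    (hf : IntervalIntegrable (fun x ↦ f x ^ 2) volume a b)
    (bound : ∀ x ∈ Ioo a b, ‖u' x‖ ≤ K * ‖u x‖ + f x) {x : ℝ} (hx : x ∈ Icc a b) :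
    ‖u x‖ ^ 2 ≤ Real.exp ((2 * K + 1) * (b - a)) * (‖u a‖ ^ 2 + ∫ y in a..b, f y ^ 2) := by
  have hab : a ≤ b := hx.1.trans hx.2
  have hIoo : Ioo a x ⊆ Ioo a b := Ioo_subset_Ioo_right hx.2
  have hfx : IntervalIntegrable (fun y ↦ f y ^ 2) volume a x :=
    hf.mono_set (by rw [uIcc_of_le hx.1, uIcc_of_le hab]; exact Icc_subset_Icc_right hx.2)
  have gronwall := le_exp_mul_add_integral_of_deriv_right_le hx.1
    ((hu.mono (Icc_subset_Icc_right hx.2)).norm.pow 2) (fun y hy ↦ (hu' y (hIoo hy)).norm_sq)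
    hfx (fun y hy ↦ two_mul_inner_le_of_norm_le (bound y (hIoo hy)))
  have source : ∫ y in a..x, Real.exp ((2 * K + 1) * (x - y)) * f y ^ 2 ≤
      Real.exp ((2 * K + 1) * (b - a)) * ∫ y in a..b, f y ^ 2 :=
    calc ∫ y in a..x, Real.exp ((2 * K + 1) * (x - y)) * f y ^ 2
        ≤ ∫ y in a..x, Real.exp ((2 * K + 1) * (b - a)) * f y ^ 2 := by
          refine intervalIntegral.integral_mono_on hx.1
            (hfx.continuousOn_mul (by fun_prop)) (hfx.const_mul _) fun y hy ↦ ?_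
          gcongr
          exacts [hx.2, hy.1]
      _ = Real.exp ((2 * K + 1) * (b - a)) * ∫ y in a..x, f y ^ 2 :=
          intervalIntegral.integral_const_mul _ _
      _ ≤ Real.exp ((2 * K + 1) * (b - a)) * ∫ y in a..b, f y ^ 2 := by
          gcongr
          exact intervalIntegral.integral_mono_interval le_rfl hx.1 hx.2
            (ae_of_all _ fun y ↦ sq_nonneg (f y)) hf
  calc ‖u x‖ ^ 2
      ≤ Real.exp ((2 * K + 1) * (x - a)) * ‖u a‖ ^ 2 +
          ∫ y in a..x, Real.exp ((2 * K + 1) * (x - y)) * f y ^ 2 := gronwall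
    _ ≤ Real.exp ((2 * K + 1) * (b - a)) * ‖u a‖ ^ 2 +
          Real.exp ((2 * K + 1) * (b - a)) * ∫ y in a..b, f y ^ 2 := by
        gcongr
        exact hx.2
    _ = Real.exp ((2 * K + 1) * (b - a)) * (‖u a‖ ^ 2 + ∫ y in a..b, f y ^ 2) := by ring

theorem integral_norm_deriv_sq_le_of_norm_deriv_right_le (hab : a ≤ b) (hK : 0 ≤ K)
    (hu : ContinuousOn u (Icc a b))
    (hu' : ∀ x ∈ Ioo a b, HasDerivWithinAt u (u' x) (Ioi x) x)
    (hint : IntervalIntegrable (fun x ↦ ‖u' x‖ ^ 2) volume a b)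
    (hf : IntervalIntegrable (fun x ↦ f x ^ 2) volume a b)
    (bound : ∀ x ∈ Ioo a b, ‖u' x‖ ≤ K * ‖u x‖ + f x) :
    ∫ x in a..b, ‖u' x‖ ^ 2 ≤ 2 * (∫ x in a..b, f x ^ 2) + 2 * K ^ 2 * (b - a) *
      (Real.exp ((2 * K + 1) * (b - a)) * (‖u a‖ ^ 2 + ∫ x in a..b, f x ^ 2)) := by
  set M := Real.exp ((2 * K + 1) * (b - a)) * (‖u a‖ ^ 2 + ∫ x in a..b, f x ^ 2)
  have pointwise (x : ℝ) (hx : x ∈ Ioo a b) : ‖u' x‖ ^ 2 ≤ 2 * f x ^ 2 + 2 * K ^ 2 * M :=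
    calc ‖u' x‖ ^ 2 ≤ (K * ‖u x‖ + f x) ^ 2 := by grw [bound x hx]
      _ ≤ 2 * ((K * ‖u x‖) ^ 2 + f x ^ 2) := add_sq_le
      _ = 2 * f x ^ 2 + 2 * K ^ 2 * ‖u x‖ ^ 2 := by ring
      _ ≤ 2 * f x ^ 2 + 2 * K ^ 2 * M := by
        grw [norm_sq_le_of_norm_deriv_right_le hK hu hu' hf bound (Ioo_subset_Icc_self hx)]
  calc ∫ x in a..b, ‖u' x‖ ^ 2
      ≤ ∫ x in a..b, (2 * f x ^ 2 + 2 * K ^ 2 * M) :=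
        intervalIntegral.integral_mono_on_of_le_Ioo hab hint
          ((hf.const_mul 2).add intervalIntegrable_const) pointwise
    _ = 2 * (∫ x in a..b, f x ^ 2) + 2 * K ^ 2 * (b - a) * M := by
        rw [intervalIntegral.integral_add (hf.const_mul 2) intervalIntegrable_const,
          intervalIntegral.integral_const_mul, intervalIntegral.integral_const, smul_eq_mul]
        ring

end Gronwall

section ContDiffOn

variable {E : Type*} {a b : ℝ}

theorem intervalIntegrable_norm_deriv_add_sq [NormedAddCommGroup E] [NormedSpace ℝ E]
    {f g : ℝ → E} (hab : a ≤ b) (hf : ContDiffOn ℝ 1 f (Icc a b)) (hg : ContinuousOn g (Icc a b)) :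
    IntervalIntegrable (fun x ↦ ‖deriv f x + g x‖ ^ 2) volume a b := by
  obtain rfl | hlt := hab.eq_or_lt
  · exact .refl
  have hcont : ContinuousOn (fun x ↦ ‖derivWithin f (Icc a b) x + g x‖ ^ 2) (Icc a b) :=
    ((hf.continuousOn_derivWithin (uniqueDiffOn_Icc hlt) le_rfl).add hg).norm.pow 2
  refine (hcont.intervalIntegrable_of_Icc hab).congr_uIoo fun x hx ↦ ?_
  rw [uIoo_of_le hab] at hx
  simp only [derivWithin_of_mem_nhds (Icc_mem_nhds hx.1 hx.2)]

theorem differentiableAt_of_contDiffOn_Icc [NormedAddCommGroup E] [NormedSpace ℝ E]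
    {f : ℝ → E} {x : ℝ} (hf : ContDiffOn ℝ 1 f (Icc a b)) (hx : x ∈ Ioo a b) :
    DifferentiableAt ℝ f x :=
  (hf.contDiffAt (Icc_mem_nhds hx.1 hx.2)).differentiableAt one_ne_zero

theorem integral_norm_deriv_sq_le_mul_integral_norm_deriv_sub_sq
    [NormedAddCommGroup E] [InnerProductSpace ℝ E] {u : ℝ → E} (A : E →L[ℝ] E) (hab : a ≤ b)
    (hu : ContDiffOn ℝ 1 u (Icc a b)) (hua : u a = 0) :
    ∫ x in a..b, ‖deriv u x‖ ^ 2 ≤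
      2 * (1 + ‖A‖ ^ 2 * (b - a) * Real.exp ((2 * ‖A‖ + 1) * (b - a))) *
        ∫ x in a..b, ‖deriv u x - A (u x)‖ ^ 2 := by
  have deriv_int : IntervalIntegrable (fun x ↦ ‖deriv u x‖ ^ 2) volume a b := by
    simpa using intervalIntegrable_norm_deriv_add_sq hab hu (g := 0) continuousOn_const
  have source_int : IntervalIntegrable (fun x ↦ ‖deriv u x - A (u x)‖ ^ 2) volume a b := by
    simpa [sub_eq_add_neg] using intervalIntegrable_norm_deriv_add_sq hab hu
      (A.continuous.comp_continuousOn hu.continuousOn).neg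
  have bound (x : ℝ) : ‖deriv u x‖ ≤ ‖A‖ * ‖u x‖ + ‖deriv u x - A (u x)‖ :=
    (norm_le_insert' _ _).trans (by grw [A.le_opNorm])
  have key := integral_norm_deriv_sq_le_of_norm_deriv_right_le hab (norm_nonneg A)
    hu.continuousOn
    (fun x hx ↦ (differentiableAt_of_contDiffOn_Icc hu hx).hasDerivAt.hasDerivWithinAt)
    deriv_int source_int fun x _ ↦ bound x
  rw [hua, norm_zero] at key
  linarith

end ContDiffOn

theorem deriv_euclidean_apply {ι : Type*} [Finite ι] {f : ℝ → EuclideanSpace ℝ ι} {x : ℝ}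
    (hf : DifferentiableAt ℝ f x) (i : ι) : deriv f x i = deriv (fun y ↦ f y i) x :=
  have := Fintype.ofFinite ι
  ((PiLp.hasFDerivAt_apply 2 (f x) i).comp_hasDerivAt x hf.hasDerivAt).deriv.symm

section Bresse

/-- The unknowns of the Bresse system for a curved beam, gathered into one vector: transverse
displacement `φ`, rotation angle `ψ` and longitudinal displacement `w`. Its values lie in
`EuclideanSpace` so that its norm is the `ℓ²` norm. -/
def bresseState (φ ψ w : ℝ → ℝ) (x : ℝ) : EuclideanSpace ℝ (Fin 3) :=
  !₂[φ x, ψ x, w x]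

/-- The operator `A` for which the state `u = (φ, ψ, w)` of a Bresse beam of curvature `ℓ` has
`u' - A u = (φ' + ψ + ℓ w, ψ', w' - ℓ φ)`, the vector of shear, bending and axial strains. -/
noncomputable def bresseCoupling (ℓ : ℝ) :
    EuclideanSpace ℝ (Fin 3) →L[ℝ] EuclideanSpace ℝ (Fin 3) :=
  Matrix.toEuclideanCLM (𝕜 := ℝ) !![0, -1, -ℓ; 0, 0, 0; ℓ, 0, 0]

variable {φ ψ w : ℝ → ℝ} {a b : ℝ}

theorem contDiffOn_bresseState {n : WithTop ℕ∞} {s : Set ℝ} (hφ : ContDiffOn ℝ n φ s)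
    (hψ : ContDiffOn ℝ n ψ s) (hw : ContDiffOn ℝ n w s) :
    ContDiffOn ℝ n (bresseState φ ψ w) s :=
  contDiffOn_euclidean.2 fun i ↦ by fin_cases i <;> assumption

theorem deriv_bresseState {x : ℝ} (h : DifferentiableAt ℝ (bresseState φ ψ w) x) :
    deriv (bresseState φ ψ w) x = !₂[deriv φ x, deriv ψ x, deriv w x] := by
  ext i
  rw [deriv_euclidean_apply h]
  fin_cases i <;> rfl

theorem norm_deriv_bresseState_sq {x : ℝ} (h : DifferentiableAt ℝ (bresseState φ ψ w) x) :
    ‖deriv (bresseState φ ψ w) x‖ ^ 2 = deriv φ x ^ 2 + deriv ψ x ^ 2 + deriv w x ^ 2 := by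
  simp [deriv_bresseState h, EuclideanSpace.real_norm_sq_eq, Fin.sum_univ_three]

theorem deriv_sub_bresseCoupling (ℓ : ℝ) {x : ℝ} (h : DifferentiableAt ℝ (bresseState φ ψ w) x) :
    deriv (bresseState φ ψ w) x - bresseCoupling ℓ (bresseState φ ψ w x) =
      !₂[deriv φ x + ψ x + ℓ * w x, deriv ψ x, deriv w x - ℓ * φ x] := by
  rw [deriv_bresseState h]
  ext i
  fin_cases i <;>
    simp [bresseCoupling, bresseState, sub_eq_add_neg, add_assoc, mul_comm, add_comm (ψ x)]

theorem norm_deriv_sub_bresseCoupling_sq (ℓ : ℝ) {x : ℝ}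
    (h : DifferentiableAt ℝ (bresseState φ ψ w) x) :
    ‖deriv (bresseState φ ψ w) x - bresseCoupling ℓ (bresseState φ ψ w x)‖ ^ 2 =
      deriv ψ x ^ 2 + (deriv φ x + ψ x + ℓ * w x) ^ 2 + (deriv w x - ℓ * φ x) ^ 2 := by
  simp [deriv_sub_bresseCoupling ℓ h, EuclideanSpace.real_norm_sq_eq, Fin.sum_univ_three,
    add_comm (deriv ψ x ^ 2)]

theorem integral_norm_deriv_sub_bresseCoupling_sq (ℓ : ℝ) (hab : a ≤ b)
    (hφ : ContDiffOn ℝ 1 φ (Icc a b)) (hψ : ContDiffOn ℝ 1 ψ (Icc a b))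
    (hw : ContDiffOn ℝ 1 w (Icc a b)) :
    ∫ x in a..b, ‖deriv (bresseState φ ψ w) x - bresseCoupling ℓ (bresseState φ ψ w x)‖ ^ 2 =
      (∫ x in a..b, deriv ψ x ^ 2) + (∫ x in a..b, (deriv φ x + ψ x + ℓ * w x) ^ 2) +
        ∫ x in a..b, (deriv w x - ℓ * φ x) ^ 2 := by
  have bending_int : IntervalIntegrable (fun x ↦ deriv ψ x ^ 2) volume a b := by
    simpa using intervalIntegrable_norm_deriv_add_sq hab hψ (g := 0) continuousOn_const
  have shear_int : IntervalIntegrable (fun x ↦ (deriv φ x + ψ x + ℓ * w x) ^ 2) volume a b := by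
    simpa [add_assoc] using intervalIntegrable_norm_deriv_add_sq hab hφ
      (hψ.continuousOn.add (hw.continuousOn.const_mul ℓ))
  have axial_int : IntervalIntegrable (fun x ↦ (deriv w x - ℓ * φ x) ^ 2) volume a b := by
    simpa [sub_eq_add_neg] using intervalIntegrable_norm_deriv_add_sq hab hw
      (hφ.continuousOn.const_mul ℓ).neg
  rw [← intervalIntegral.integral_add bending_int shear_int,
    ← intervalIntegral.integral_add (bending_int.add shear_int) axial_int]
  exact intervalIntegral.integral_congr_Ioo_of_le hab fun x hx ↦
    norm_deriv_sub_bresseCoupling_sq ℓ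
      (differentiableAt_of_contDiffOn_Icc (contDiffOn_bresseState hφ hψ hw) hx)

theorem integral_deriv_sq_le_mul_integral_bresse_strain_sq (ℓ : ℝ) (hab : a ≤ b)
    (hφ : ContDiffOn ℝ 1 φ (Icc a b)) (hψ : ContDiffOn ℝ 1 ψ (Icc a b))
    (hw : ContDiffOn ℝ 1 w (Icc a b)) (hφa : φ a = 0) (hψa : ψ a = 0) (hwa : w a = 0) :
    ∫ x in a..b, (deriv φ x ^ 2 + deriv ψ x ^ 2 + deriv w x ^ 2) ≤
      2 * (1 + ‖bresseCoupling ℓ‖ ^ 2 * (b - a) *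
          Real.exp ((2 * ‖bresseCoupling ℓ‖ + 1) * (b - a))) *
        ((∫ x in a..b, deriv ψ x ^ 2) + (∫ x in a..b, (deriv φ x + ψ x + ℓ * w x) ^ 2) +
          ∫ x in a..b, (deriv w x - ℓ * φ x) ^ 2) := by
  have hu : ContDiffOn ℝ 1 (bresseState φ ψ w) (Icc a b) := contDiffOn_bresseState hφ hψ hw
  have hua : bresseState φ ψ w a = 0 := by
    ext i
    fin_cases i
    exacts [hφa, hψa, hwa]
  have integral_deriv : ∫ x in a..b, ‖deriv (bresseState φ ψ w) x‖ ^ 2 =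
      ∫ x in a..b, (deriv φ x ^ 2 + deriv ψ x ^ 2 + deriv w x ^ 2) :=
    intervalIntegral.integral_congr_Ioo_of_le hab fun x hx ↦
      norm_deriv_bresseState_sq (differentiableAt_of_contDiffOn_Icc hu hx)
  rw [← integral_deriv, ← integral_norm_deriv_sub_bresseCoupling_sq ℓ hab hφ hψ hw]
  exact integral_norm_deriv_sq_le_mul_integral_norm_deriv_sub_sq (bresseCoupling ℓ) hab hu hua

end Bresse

theorem stmt_11_general (L ℓ k k₀ b : ℝ) (hL : 0 ≤ L) (hk : 0 < k) (hk₀ : 0 < k₀) (hb : 0 < b) :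
    ∃ β : ℝ, 0 < β ∧
      ∀ φ ψ w : ℝ → ℝ, ContDiffOn ℝ 1 φ (Icc 0 L) → ContDiffOn ℝ 1 ψ (Icc 0 L) →
        ContDiffOn ℝ 1 w (Icc 0 L) → φ 0 = 0 → ψ 0 = 0 → w 0 = 0 →
        (∫ x in (0 : ℝ)..L, (deriv φ x ^ 2 + deriv ψ x ^ 2 + deriv w x ^ 2)) ≤
          β * (b * (∫ x in (0 : ℝ)..L, deriv ψ x ^ 2) +
            k * (∫ x in (0 : ℝ)..L, (deriv φ x + ψ x + ℓ * w x) ^ 2) +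
            k₀ * (∫ x in (0 : ℝ)..L, (deriv w x - ℓ * φ x) ^ 2)) := by
  let A := bresseCoupling ℓ
  let C := 2 * (1 + ‖A‖ ^ 2 * (L - 0) * Real.exp ((2 * ‖A‖ + 1) * (L - 0)))
  have hC : 0 < C := by simp only [C, sub_zero]; positivity
  obtain ⟨m, hm, hmb, hmk, hmk₀⟩ : ∃ m, 0 < m ∧ m ≤ b ∧ m ≤ k ∧ m ≤ k₀ :=
    ⟨min b (min k k₀), by positivity, by simp, by simp, by simp⟩
  refine ⟨C / m, by positivity, fun φ ψ w hφ hψ hw hφ0 hψ0 hw0 ↦ ?_⟩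
  have integral_sq_nonneg (f : ℝ → ℝ) : 0 ≤ ∫ x in (0 : ℝ)..L, f x ^ 2 :=
    intervalIntegral.integral_nonneg hL fun x _ ↦ sq_nonneg (f x)
  set B := ∫ x in (0 : ℝ)..L, deriv ψ x ^ 2
  set S := ∫ x in (0 : ℝ)..L, (deriv φ x + ψ x + ℓ * w x) ^ 2
  set N := ∫ x in (0 : ℝ)..L, (deriv w x - ℓ * φ x) ^ 2
  calc ∫ x in (0 : ℝ)..L, (deriv φ x ^ 2 + deriv ψ x ^ 2 + deriv w x ^ 2)
      ≤ C * (B + S + N) :=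
        integral_deriv_sq_le_mul_integral_bresse_strain_sq ℓ hL hφ hψ hw hφ0 hψ0 hw0
    _ = C / m * (m * B + m * S + m * N) := by field_simp
    _ ≤ C / m * (b * B + k * S + k₀ * N) := by
        gcongr <;> exact integral_sq_nonneg _

/-- Let `L > 0` and `ℓ, k, k₀, b > 0`. There exists `β > 0`, depending
only on `L, ℓ, k, k₀, b`, such that for all `φ, ψ, w ∈ C¹` vanishing at `x = 0` and
`x = L`:
`∫₀^L (|φ_x|² + |ψ_x|² + |w_x|²) dx
  ≤ β [ b∫₀^L |ψ_x|² + k∫₀^L |φ_x + ψ + ℓw|² + k₀∫₀^L |w_x − ℓφ|² ]`. -/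
theorem stmt_11 (L ℓ k k₀ b : ℝ) (hL : 0 < L) (hℓ : 0 < ℓ) (hk : 0 < k)
    (hk₀ : 0 < k₀) (hb : 0 < b) :
    ∃ β : ℝ, 0 < β ∧
      ∀ φ ψ w : ℝ → ℝ, ContDiff ℝ 1 φ → ContDiff ℝ 1 ψ → ContDiff ℝ 1 w →
        φ 0 = 0 → φ L = 0 → ψ 0 = 0 → ψ L = 0 → w 0 = 0 → w L = 0 →
        (∫ x in (0:ℝ)..L, ((deriv φ x) ^ 2 + (deriv ψ x) ^ 2 + (deriv w x) ^ 2))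
          ≤ β * (b * (∫ x in (0:ℝ)..L, (deriv ψ x) ^ 2)
            + k * (∫ x in (0:ℝ)..L, (deriv φ x + ψ x + ℓ * w x) ^ 2)
            + k₀ * (∫ x in (0:ℝ)..L, (deriv w x - ℓ * φ x) ^ 2)) := by
  obtain ⟨β, hβ, hbound⟩ := stmt_11_general L ℓ k k₀ b hL.le hk hk₀ hb
  exact ⟨β, hβ, fun φ ψ w hφ hψ hw hφ0 _ hψ0 _ hw0 _ ↦
    hbound φ ψ w hφ.contDiffOn hψ.contDiffOn hw.contDiffOn hφ0 hψ0 hw0⟩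
end

section
/- (Locally Lipschitz dependence on initial data.) Assume f₁,f₂,f₃ ∈ C¹(ℝ³) with |∇f_i(u,v,w)| ≤ c_f(1+|u|^{p−1}+|v|^{p−1}+|w|^{p−1}) for some c_f > 0, p ≥ 1; g₁,g₂,g₃ ∈ C¹(ℝ) monotone increasing with g_i(0) = 0 and m ≤ g_i' ≤ M for constants 0 < m ≤ M; and a₁,a₂,a₃ ∈ L^∞(0,L) nonnegative. Let R > 0 and let Z¹ = (φ¹,ψ¹,w¹,φ¹_t,ψ¹_t,w¹_t), Z² = (φ²,ψ²,w²,φ²_t,ψ²_t,w²_t) be two C² classical solutions of the semilinear Bresse system with localized damping on [0,L]×[0,T] satisfying ∥Z^i(t)∥_H ≤ R for all t ∈ [0,T]. Then there exist constants C_R, K_R > 0, depending only on R and the data, such that ∥Z¹(t) − Z²(t)∥²_H ≤ C_R e^{K_R t} ∥Z¹(0) − Z²(0)∥²_H for all t ∈ [0,T]. -/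
open MeasureTheory

/-- The squared `H`-norm
`∥Z(t)∥²_H = ρ₁∥φ_t∥² + ρ₂∥ψ_t∥² + ρ₁∥w_t∥² + b∥ψ_x∥² + k∥φ_x+ψ+ℓw∥² + k₀∥w_x−ℓφ∥²`
of the state of the Bresse system at time `t`, where `∥·∥` is the `L²(0,L)`-norm. -/
noncomputable def HnormSq (ρ₁ ρ₂ b k k₀ ℓ L : ℝ) (φ ψ w : ℝ → ℝ → ℝ) (t : ℝ) : ℝ :=
  ρ₁ * (∫ x in (0:ℝ)..L, (deriv (fun s => φ x s) t) ^ 2)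
  + ρ₂ * (∫ x in (0:ℝ)..L, (deriv (fun s => ψ x s) t) ^ 2)
  + ρ₁ * (∫ x in (0:ℝ)..L, (deriv (fun s => w x s) t) ^ 2)
  + b * (∫ x in (0:ℝ)..L, (deriv (fun y => ψ y t) x) ^ 2)
  + k * (∫ x in (0:ℝ)..L, (deriv (fun y => φ y t) x + ψ x t + ℓ * w x t) ^ 2)
  + k₀ * (∫ x in (0:ℝ)..L, (deriv (fun y => w y t) x - ℓ * φ x t) ^ 2)

/-- `(φ,ψ,w)` is a classical solution, of class `C^N`, of the semilinear Bresse
system with localized damping on `[0,L] × [0,T]`, with Dirichlet boundary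
conditions. -/
def IsBresseSolution (N : ℕ) (ρ₁ ρ₂ k k₀ b ℓ L T : ℝ)
    (a₁ a₂ a₃ g₁ g₂ g₃ : ℝ → ℝ) (f₁ f₂ f₃ : ℝ → ℝ → ℝ → ℝ)
    (φ ψ w : ℝ → ℝ → ℝ) : Prop :=
  ContDiff ℝ N (fun z : ℝ × ℝ => φ z.1 z.2) ∧
  ContDiff ℝ N (fun z : ℝ × ℝ => ψ z.1 z.2) ∧
  ContDiff ℝ N (fun z : ℝ × ℝ => w z.1 z.2) ∧
  (∀ t ∈ Set.Icc (0:ℝ) T,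
    φ 0 t = 0 ∧ φ L t = 0 ∧ ψ 0 t = 0 ∧ ψ L t = 0 ∧ w 0 t = 0 ∧ w L t = 0) ∧
  (∀ x ∈ Set.Icc (0:ℝ) L, ∀ t ∈ Set.Icc (0:ℝ) T,
    (ρ₁ * deriv (deriv (fun s => φ x s)) t
      - k * deriv (fun y => deriv (fun y' => φ y' t) y + ψ y t + ℓ * w y t) x
      - k₀ * ℓ * (deriv (fun y => w y t) x - ℓ * φ x t)
      + a₁ x * g₁ (deriv (fun s => φ x s) t)
      + f₁ (φ x t) (ψ x t) (w x t) = 0) ∧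
    (ρ₂ * deriv (deriv (fun s => ψ x s)) t
      - b * deriv (fun y => deriv (fun y' => ψ y' t) y) x
      + k * (deriv (fun y => φ y t) x + ψ x t + ℓ * w x t)
      + a₂ x * g₂ (deriv (fun s => ψ x s) t)
      + f₂ (φ x t) (ψ x t) (w x t) = 0) ∧
    (ρ₁ * deriv (deriv (fun s => w x s)) t
      - k₀ * deriv (fun y => deriv (fun y' => w y' t) y - ℓ * φ y t) x
      + k * ℓ * (deriv (fun y => φ y t) x + ψ x t + ℓ * w x t)
      + a₃ x * g₃ (deriv (fun s => w x s) t)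
      + f₃ (φ x t) (ψ x t) (w x t) = 0))

/-!
The difference `Z = Z¹ - Z²` solves the linear Bresse system with sources. Its energy `‖Z‖²_H`
changes in time only through the work of these sources, since the Dirichlet conditions annihilate
the energy flux through the ends of the beam. Each damping term does work of a favourable sign,
because `gᵢ` is monotone and `aᵢ ≥ 0`, and is dropped. For the reaction terms, integrating from
`x = 0`, where all displacements vanish, shows that the strains control the displacements
uniformly in `x`. Hence both solutions stay in a fixed ball of `ℝ³`, on which `(f₁, f₂, f₃)` is
Lipschitz, and the work of the reaction terms is at most a multiple of `‖Z‖²_H`. Grönwall's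
inequality concludes.
-/

open Set Function

theorem le_exp_mul_add_integral_of_deriv_le {e e' q : ℝ → ℝ} {a b K : ℝ} (hK : 0 ≤ K)
    (he : ContinuousOn e (Icc a b)) (he' : ∀ x ∈ Ioo a b, HasDerivAt e (e' x) x)
    (hq : Continuous q) (hq₀ : ∀ x, 0 ≤ q x) (hle : ∀ x ∈ Ioo a b, e' x ≤ K * e x + q x)
    {x : ℝ} (hx : x ∈ Icc a b) :
    e x ≤ Real.exp (K * (x - a)) * (e a + ∫ y in a..x, q y) := by
  have hasDerivAt_decay (y : ℝ) : HasDerivAt (fun y => Real.exp (-(K * (y - a))))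
      (Real.exp (-(K * (y - a))) * -(K * 1)) y :=
    (((hasDerivAt_id y).sub_const a).const_mul K).neg.exp
  have hasDerivAt_integral (y : ℝ) : HasDerivAt (fun y => ∫ z in a..y, q z) (q y) y :=
    (hq.integral_hasStrictDerivAt a y).hasDerivAt
  have hanti : AntitoneOn
      (fun y => Real.exp (-(K * (y - a))) * e y - ∫ z in a..y, q z) (Icc a b) := by
    refine antitoneOn_of_hasDerivWithinAt_nonpos (convex_Icc a b)
      ((Continuous.continuousOn (by fun_prop)).mul he |>.sub
        fun y _ => (hasDerivAt_integral y).continuousAt.continuousWithinAt)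
      (f' := fun y => Real.exp (-(K * (y - a))) * -(K * 1) * e y +
        Real.exp (-(K * (y - a))) * e' y - q y) (fun y hy => ?_) fun y hy => ?_
    · rw [interior_Icc] at hy
      exact (((hasDerivAt_decay y).mul (he' y hy)).sub (hasDerivAt_integral y)).hasDerivWithinAt
    · rw [interior_Icc] at hy
      have hdecay : Real.exp (-(K * (y - a))) ≤ 1 :=
        Real.exp_le_one_iff.2 (neg_nonpos.2 (mul_nonneg hK (sub_nonneg.2 hy.1.le)))
      nlinarith [mul_le_mul_of_nonneg_left (hle y hy) (Real.exp_pos (-(K * (y - a)))).le,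
        mul_le_mul_of_nonneg_right hdecay (hq₀ y)]
  have hxa : Real.exp (-(K * (x - a))) * e x ≤ e a + ∫ y in a..x, q y := by
    simpa [sub_le_iff_le_add] using hanti (left_mem_Icc.2 (hx.1.trans hx.2)) hx hx.1
  rwa [Real.exp_neg, inv_mul_le_iff₀ (Real.exp_pos _)] at hxa

theorem norm_sq_le_sum_sq (p : ℝ × ℝ × ℝ) : ‖p‖ ^ 2 ≤ p.1 ^ 2 + p.2.1 ^ 2 + p.2.2 ^ 2 := by
  refine (Real.le_sqrt (norm_nonneg p) (by positivity)).1 ?_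
  refine max_le (Real.abs_le_sqrt ?_) (max_le (Real.abs_le_sqrt ?_) (Real.abs_le_sqrt ?_)) <;>
    nlinarith [sq_nonneg p.1, sq_nonneg p.2.1, sq_nonneg p.2.2]

theorem sum_sq_le_three_mul_norm_sq (p : ℝ × ℝ × ℝ) :
    p.1 ^ 2 + p.2.1 ^ 2 + p.2.2 ^ 2 ≤ 3 * ‖p‖ ^ 2 := by
  have h₁ : p.1 ^ 2 ≤ ‖p‖ ^ 2 := sq_le_sq.2 (by simpa using norm_fst_le p)
  have h₂ : p.2.1 ^ 2 ≤ ‖p‖ ^ 2 :=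
    sq_le_sq.2 (by simpa using (norm_fst_le p.2).trans (norm_snd_le p))
  have h₃ : p.2.2 ^ 2 ≤ ‖p‖ ^ 2 :=
    sq_le_sq.2 (by simpa using (norm_snd_le p.2).trans (norm_snd_le p))
  linarith

theorem sum_sq_sub_le_of_lipschitzOnWith {F : ℝ × ℝ × ℝ → ℝ × ℝ × ℝ} {Λ : NNReal}
    {s : Set (ℝ × ℝ × ℝ)} (hF : LipschitzOnWith Λ F s) {z₁ z₂ : ℝ × ℝ × ℝ} (hz₁ : z₁ ∈ s)
    (hz₂ : z₂ ∈ s) :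
    ((F z₁).1 - (F z₂).1) ^ 2 + ((F z₁).2.1 - (F z₂).2.1) ^ 2 + ((F z₁).2.2 - (F z₂).2.2) ^ 2 ≤
      3 * Λ ^ 2 * ‖z₁ - z₂‖ ^ 2 :=
  calc ((F z₁).1 - (F z₂).1) ^ 2 + ((F z₁).2.1 - (F z₂).2.1) ^ 2 + ((F z₁).2.2 - (F z₂).2.2) ^ 2
      ≤ 3 * ‖F z₁ - F z₂‖ ^ 2 := sum_sq_le_three_mul_norm_sq (F z₁ - F z₂)
    _ ≤ 3 * (Λ * ‖z₁ - z₂‖) ^ 2 := by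
        gcongr
        exact hF.norm_sub_le hz₁ hz₂
    _ = 3 * Λ ^ 2 * ‖z₁ - z₂‖ ^ 2 := by ring

theorem two_mul_sub_mul_sub_le_of_damped {g : ℝ → ℝ} (hg : Monotone g) {a : ℝ} (ha : 0 ≤ a)
    {p₁ p₂ v₁ v₂ F₁ F₂ : ℝ} (h₁ : p₁ + a * g v₁ + F₁ = 0) (h₂ : p₂ + a * g v₂ + F₂ = 0) :
    2 * ((p₁ - p₂) * (v₁ - v₂)) ≤ (F₁ - F₂) ^ 2 + (v₁ - v₂) ^ 2 := by
  have hdamp : 0 ≤ a * ((g v₁ - g v₂) * (v₁ - v₂)) :=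
    mul_nonneg ha ((hg.monovary monotone_id).sub_mul_sub_nonneg v₂ v₁)
  have hp : p₁ - p₂ = -(a * (g v₁ - g v₂)) - (F₁ - F₂) := by linarith
  rw [hp]
  linarith [sq_nonneg (F₁ - F₂ + (v₁ - v₂))]

namespace Bresse

section PartialDerivatives

variable {E : Type*} [NormedAddCommGroup E] [NormedSpace ℝ E] {u v : ℝ → ℝ → E}

/-- The partial derivative `∂u/∂x` of `u = u(x, t)`. It is spelled with `deriv` so that it agrees
definitionally with the expressions in `HnormSq` and `IsBresseSolution`. -/
noncomputable def dx (u : ℝ → ℝ → E) (x t : ℝ) : E := deriv (fun y => u y t) x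

/-- The partial derivative `∂u/∂t` of `u = u(x, t)`, spelled in the same way as `dx`. -/
noncomputable def dt (u : ℝ → ℝ → E) (x t : ℝ) : E := deriv (fun s => u x s) t

theorem hasDerivAt_fderiv_left (hu : Differentiable ℝ (uncurry u)) (x t : ℝ) :
    HasDerivAt (fun y => u y t) (fderiv ℝ (uncurry u) (x, t) (1, 0)) x :=
  HasFDerivAt.comp_hasDerivAt (f := fun y => (y, t)) x (hu (x, t)).hasFDerivAt
    ((hasDerivAt_id' x).prodMk (hasDerivAt_const x t))

theorem hasDerivAt_fderiv_right (hu : Differentiable ℝ (uncurry u)) (x t : ℝ) :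
    HasDerivAt (fun s => u x s) (fderiv ℝ (uncurry u) (x, t) (0, 1)) t :=
  (hu (x, t)).hasFDerivAt.comp_hasDerivAt t ((hasDerivAt_const t x).prodMk (hasDerivAt_id' t))

theorem hasDerivAt_dx (hu : Differentiable ℝ (uncurry u)) (x t : ℝ) :
    HasDerivAt (fun y => u y t) (dx u x t) x :=
  (hasDerivAt_fderiv_left hu x t).differentiableAt.hasDerivAt

theorem hasDerivAt_dt (hu : Differentiable ℝ (uncurry u)) (x t : ℝ) :
    HasDerivAt (fun s => u x s) (dt u x t) t :=
  (hasDerivAt_fderiv_right hu x t).differentiableAt.hasDerivAt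

theorem uncurry_dx (hu : Differentiable ℝ (uncurry u)) :
    uncurry (dx u) = fun z => fderiv ℝ (uncurry u) z (1, 0) :=
  funext fun z => (hasDerivAt_fderiv_left hu z.1 z.2).deriv

theorem uncurry_dt (hu : Differentiable ℝ (uncurry u)) :
    uncurry (dt u) = fun z => fderiv ℝ (uncurry u) z (0, 1) :=
  funext fun z => (hasDerivAt_fderiv_right hu z.1 z.2).deriv

theorem contDiff_dx {m n : WithTop ℕ∞} (hu : ContDiff ℝ n (uncurry u)) (hmn : m + 1 ≤ n) :
    ContDiff ℝ m (uncurry (dx u)) := by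
  rw [uncurry_dx ((hu.of_le (le_add_self.trans hmn)).differentiable one_ne_zero)]
  exact (hu.fderiv_right hmn).clm_apply contDiff_const

theorem contDiff_dt {m n : WithTop ℕ∞} (hu : ContDiff ℝ n (uncurry u)) (hmn : m + 1 ≤ n) :
    ContDiff ℝ m (uncurry (dt u)) := by
  rw [uncurry_dt ((hu.of_le (le_add_self.trans hmn)).differentiable one_ne_zero)]
  exact (hu.fderiv_right hmn).clm_apply contDiff_const

theorem dt_dx_comm (hu : ContDiff ℝ 2 (uncurry u)) (x t : ℝ) :
    dt (dx u) x t = dx (dt u) x t := by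
  have hd : Differentiable ℝ (uncurry u) := hu.differentiable two_ne_zero
  have hdd : Differentiable ℝ (fderiv ℝ (uncurry u)) :=
    (hu.fderiv_right (m := 1) one_add_one_eq_two.le).differentiable one_ne_zero
  have hsnd (p q : ℝ × ℝ) : fderiv ℝ (fun z => fderiv ℝ (uncurry u) z p) (x, t) q =
      fderiv ℝ (fderiv ℝ (uncurry u)) (x, t) q p := by
    simp [fderiv_clm_apply (hdd (x, t)) (differentiableAt_const p)]
  have hsymm : IsSymmSndFDerivAt ℝ (uncurry u) (x, t) :=
    hu.contDiffAt.isSymmSndFDerivAt (by simp)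
  calc dt (dx u) x t = fderiv ℝ (uncurry (dx u)) (x, t) (0, 1) :=
        (hasDerivAt_fderiv_right ((contDiff_dx hu one_add_one_eq_two.le).differentiable
          one_ne_zero) x t).deriv
    _ = fderiv ℝ (uncurry (dt u)) (x, t) (1, 0) := by
        rw [uncurry_dx hd, uncurry_dt hd, hsnd, hsnd, hsymm.eq]
    _ = dx (dt u) x t :=
        (hasDerivAt_fderiv_left ((contDiff_dt hu one_add_one_eq_two.le).differentiable
          one_ne_zero) x t).deriv.symm

theorem dx_sub (hu : Differentiable ℝ (uncurry u)) (hv : Differentiable ℝ (uncurry v)) :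
    dx (u - v) = dx u - dx v :=
  funext₂ fun x t => ((hasDerivAt_dx hu x t).sub (hasDerivAt_dx hv x t)).deriv

theorem dt_sub (hu : Differentiable ℝ (uncurry u)) (hv : Differentiable ℝ (uncurry v)) :
    dt (u - v) = dt u - dt v :=
  funext₂ fun x t => ((hasDerivAt_dt hu x t).sub (hasDerivAt_dt hv x t)).deriv

theorem dt_eq_zero_of_forall_mem_Icc {x a b t : ℝ} (hu : ∀ s ∈ Icc a b, u x s = 0)
    (ht : t ∈ Ioo a b) : dt u x t = 0 := by
  have hu₀ : (fun s => u x s) =ᶠ[nhds t] fun _ => 0 :=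
    Filter.mem_of_superset (Icc_mem_nhds ht.1 ht.2) hu
  exact hu₀.deriv_eq.trans (deriv_const t 0)

theorem hasDerivAt_integral_of_contDiff (hu : ContDiff ℝ 1 (uncurry u)) (a b t : ℝ) :
    HasDerivAt (fun s => ∫ x in a..b, u x s) (∫ x in a..b, dt u x t) t := by
  have hut : Continuous (uncurry (dt u)) := (contDiff_dt (m := 0) hu (by simp)).continuous
  obtain ⟨B, hB⟩ := (isCompact_uIcc.prod (isCompact_closedBall t 1)).exists_bound_of_continuousOn
    (s := uIcc a b ×ˢ Metric.closedBall t 1) hut.continuousOn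
  refine (intervalIntegral.hasDerivAt_integral_of_dominated_loc_of_deriv_le
    (F := fun s x => u x s) (F' := fun s x => dt u x s) (bound := fun _ => B)
    (Metric.closedBall_mem_nhds t one_pos)
    (.of_forall fun s => (hu.continuous.uncurry_right s).aestronglyMeasurable)
    ((hu.continuous.uncurry_right t).intervalIntegrable _ _)
    (hut.uncurry_right t).aestronglyMeasurable
    (.of_forall fun x hx s hs => hB (x, s) ⟨uIoc_subset_uIcc hx, hs⟩)
    intervalIntegrable_const
    (.of_forall fun x _ s _ => hasDerivAt_dt (hu.differentiable one_ne_zero) x s)).2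

end PartialDerivatives

/-- A `C²` displacement field on `[0, L] × [0, T]` with homogeneous Dirichlet conditions at `x = 0`
and `x = L`. As in `IsBresseSolution`, the field is a function on the whole plane. -/
structure IsDirichletField (L T : ℝ) (u : ℝ → ℝ → ℝ) : Prop where
  contDiff : ContDiff ℝ 2 (uncurry u)
  left : ∀ t ∈ Icc 0 T, u 0 t = 0
  right : ∀ t ∈ Icc 0 T, u L t = 0

theorem IsDirichletField.sub {L T : ℝ} {u v : ℝ → ℝ → ℝ} (hu : IsDirichletField L T u)
    (hv : IsDirichletField L T v) : IsDirichletField L T (u - v) where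
  contDiff := hu.contDiff.sub hv.contDiff
  left t ht := by simp [hu.left t ht, hv.left t ht]
  right t ht := by simp [hu.right t ht, hv.right t ht]

section Fields

/-- The shear strain `φ_x + ψ + ℓw` of the Bresse beam. -/
noncomputable def shear (ℓ : ℝ) (φ ψ w : ℝ → ℝ → ℝ) (x t : ℝ) : ℝ :=
  dx φ x t + ψ x t + ℓ * w x t

/-- The axial strain `w_x - ℓφ` of the Bresse beam. -/
noncomputable def axial (ℓ : ℝ) (φ w : ℝ → ℝ → ℝ) (x t : ℝ) : ℝ :=
  dx w x t - ℓ * φ x t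

/-- The pointwise value `(φ, ψ, w)` of the three displacements; as an element of `ℝ × ℝ × ℝ` it is
measured in the maximum norm. -/
def state (φ ψ w : ℝ → ℝ → ℝ) (x t : ℝ) : ℝ × ℝ × ℝ :=
  (φ x t, ψ x t, w x t)

/-- The sum of the squared strains `ψ_x`, `φ_x + ψ + ℓw` and `w_x - ℓφ`. -/
noncomputable def strainSq (ℓ : ℝ) (φ ψ w : ℝ → ℝ → ℝ) (x t : ℝ) : ℝ :=
  dx ψ x t ^ 2 + shear ℓ φ ψ w x t ^ 2 + axial ℓ φ w x t ^ 2

/-- The sum of the squared velocities `φ_t`, `ψ_t` and `w_t`. -/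
noncomputable def velocitySq (φ ψ w : ℝ → ℝ → ℝ) (x t : ℝ) : ℝ :=
  dt φ x t ^ 2 + dt ψ x t ^ 2 + dt w x t ^ 2

/-- The integrand of `HnormSq`. -/
noncomputable def energyDensity (ρ₁ ρ₂ b k k₀ ℓ : ℝ) (φ ψ w : ℝ → ℝ → ℝ) (x t : ℝ) : ℝ :=
  ρ₁ * dt φ x t ^ 2 + ρ₂ * dt ψ x t ^ 2 + ρ₁ * dt w x t ^ 2
    + b * dx ψ x t ^ 2 + k * shear ℓ φ ψ w x t ^ 2 + k₀ * axial ℓ φ w x t ^ 2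

/-- The energy flux through a cross-section: each stress times the velocity it works on. -/
noncomputable def energyFlux (b k k₀ ℓ : ℝ) (φ ψ w : ℝ → ℝ → ℝ) (x t : ℝ) : ℝ :=
  b * (dx ψ x t * dt ψ x t) + k * (shear ℓ φ ψ w x t * dt φ x t)
    + k₀ * (axial ℓ φ w x t * dt w x t)

/-- The linear part `ρ₁φ_tt - k(φ_x + ψ + ℓw)_x - k₀ℓ(w_x - ℓφ)` of the first Bresse equation. -/
noncomputable def opφ (ρ₁ k k₀ ℓ : ℝ) (φ ψ w : ℝ → ℝ → ℝ) (x t : ℝ) : ℝ :=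
  ρ₁ * dt (dt φ) x t - k * dx (shear ℓ φ ψ w) x t - k₀ * ℓ * axial ℓ φ w x t

/-- The linear part `ρ₂ψ_tt - bψ_xx + k(φ_x + ψ + ℓw)` of the second Bresse equation. -/
noncomputable def opψ (ρ₂ b k ℓ : ℝ) (φ ψ w : ℝ → ℝ → ℝ) (x t : ℝ) : ℝ :=
  ρ₂ * dt (dt ψ) x t - b * dx (dx ψ) x t + k * shear ℓ φ ψ w x t

/-- The linear part `ρ₁w_tt - k₀(w_x - ℓφ)_x + kℓ(φ_x + ψ + ℓw)` of the third Bresse equation. -/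
noncomputable def opw (ρ₁ k k₀ ℓ : ℝ) (φ ψ w : ℝ → ℝ → ℝ) (x t : ℝ) : ℝ :=
  ρ₁ * dt (dt w) x t - k₀ * dx (axial ℓ φ w) x t + k * ℓ * shear ℓ φ ψ w x t

/-- The power density: the linear parts of the three equations times the velocities. -/
noncomputable def power (ρ₁ ρ₂ b k k₀ ℓ : ℝ) (φ ψ w : ℝ → ℝ → ℝ) (x t : ℝ) : ℝ :=
  opφ ρ₁ k k₀ ℓ φ ψ w x t * dt φ x t + opψ ρ₂ b k ℓ φ ψ w x t * dt ψ x t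
    + opw ρ₁ k k₀ ℓ φ ψ w x t * dt w x t

variable {ρ₁ ρ₂ b k k₀ ℓ L T t : ℝ} {φ ψ w : ℝ → ℝ → ℝ}

theorem contDiff_shear {m n : WithTop ℕ∞} (hφ : ContDiff ℝ n (uncurry φ))
    (hψ : ContDiff ℝ n (uncurry ψ)) (hw : ContDiff ℝ n (uncurry w)) (hmn : m + 1 ≤ n) :
    ContDiff ℝ m (uncurry (shear ℓ φ ψ w)) :=
  have hle : m ≤ n := le_self_add.trans hmn
  ((contDiff_dx hφ hmn).add (hψ.of_le hle)).add (contDiff_const.mul (hw.of_le hle))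

theorem contDiff_axial {m n : WithTop ℕ∞} (hφ : ContDiff ℝ n (uncurry φ))
    (hw : ContDiff ℝ n (uncurry w)) (hmn : m + 1 ≤ n) :
    ContDiff ℝ m (uncurry (axial ℓ φ w)) :=
  (contDiff_dx hw hmn).sub (contDiff_const.mul (hφ.of_le (le_self_add.trans hmn)))

theorem contDiff_energyDensity {m n : WithTop ℕ∞} (hφ : ContDiff ℝ n (uncurry φ))
    (hψ : ContDiff ℝ n (uncurry ψ)) (hw : ContDiff ℝ n (uncurry w)) (hmn : m + 1 ≤ n) :
    ContDiff ℝ m (uncurry (energyDensity ρ₁ ρ₂ b k k₀ ℓ φ ψ w)) :=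
  (((((contDiff_const.mul ((contDiff_dt hφ hmn).pow 2)).add
    (contDiff_const.mul ((contDiff_dt hψ hmn).pow 2))).add
    (contDiff_const.mul ((contDiff_dt hw hmn).pow 2))).add
    (contDiff_const.mul ((contDiff_dx hψ hmn).pow 2))).add
    (contDiff_const.mul ((contDiff_shear hφ hψ hw hmn).pow 2))).add
    (contDiff_const.mul ((contDiff_axial hφ hw hmn).pow 2))

theorem contDiff_energyFlux {m n : WithTop ℕ∞} (hφ : ContDiff ℝ n (uncurry φ))
    (hψ : ContDiff ℝ n (uncurry ψ)) (hw : ContDiff ℝ n (uncurry w)) (hmn : m + 1 ≤ n) :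
    ContDiff ℝ m (uncurry (energyFlux b k k₀ ℓ φ ψ w)) :=
  ((contDiff_const.mul ((contDiff_dx hψ hmn).mul (contDiff_dt hψ hmn))).add
    (contDiff_const.mul ((contDiff_shear hφ hψ hw hmn).mul (contDiff_dt hφ hmn)))).add
    (contDiff_const.mul ((contDiff_axial hφ hw hmn).mul (contDiff_dt hw hmn)))

theorem continuous_strainSq (hφ : ContDiff ℝ 1 (uncurry φ)) (hψ : ContDiff ℝ 1 (uncurry ψ))
    (hw : ContDiff ℝ 1 (uncurry w)) : Continuous (uncurry (strainSq ℓ φ ψ w)) :=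
  have hmn : (0 : WithTop ℕ∞) + 1 ≤ 1 := (zero_add 1).le
  (((contDiff_dx hψ hmn).continuous.pow 2).add ((contDiff_shear hφ hψ hw hmn).continuous.pow 2)).add
    ((contDiff_axial hφ hw hmn).continuous.pow 2)

theorem continuous_velocitySq (hφ : ContDiff ℝ 1 (uncurry φ)) (hψ : ContDiff ℝ 1 (uncurry ψ))
    (hw : ContDiff ℝ 1 (uncurry w)) : Continuous (uncurry (velocitySq φ ψ w)) :=
  have hmn : (0 : WithTop ℕ∞) + 1 ≤ 1 := (zero_add 1).le
  (((contDiff_dt hφ hmn).continuous.pow 2).add ((contDiff_dt hψ hmn).continuous.pow 2)).add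
    ((contDiff_dt hw hmn).continuous.pow 2)

theorem continuous_power (hφ : ContDiff ℝ 2 (uncurry φ)) (hψ : ContDiff ℝ 2 (uncurry ψ))
    (hw : ContDiff ℝ 2 (uncurry w)) :
    Continuous (uncurry (power ρ₁ ρ₂ b k k₀ ℓ φ ψ w)) := by
  have h₁ : (1 : WithTop ℕ∞) + 1 ≤ 2 := one_add_one_eq_two.le
  have h₀ : (0 : WithTop ℕ∞) + 1 ≤ 1 := (zero_add 1).le
  have hφt := contDiff_dt hφ h₁
  have hψt := contDiff_dt hψ h₁
  have hwt := contDiff_dt hw h₁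
  have hψx := contDiff_dx hψ h₁
  have hS := contDiff_shear (ℓ := ℓ) hφ hψ hw h₁
  have hN := contDiff_axial (ℓ := ℓ) hφ hw h₁
  have hopφ : Continuous (uncurry (opφ ρ₁ k k₀ ℓ φ ψ w)) :=
    ((continuous_const.mul (contDiff_dt hφt h₀).continuous).sub
      (continuous_const.mul (contDiff_dx hS h₀).continuous)).sub
      (continuous_const.mul hN.continuous)
  have hopψ : Continuous (uncurry (opψ ρ₂ b k ℓ φ ψ w)) :=
    ((continuous_const.mul (contDiff_dt hψt h₀).continuous).sub
      (continuous_const.mul (contDiff_dx hψx h₀).continuous)).add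
      (continuous_const.mul hS.continuous)
  have hopw : Continuous (uncurry (opw ρ₁ k k₀ ℓ φ ψ w)) :=
    ((continuous_const.mul (contDiff_dt hwt h₀).continuous).sub
      (continuous_const.mul (contDiff_dx hN h₀).continuous)).add
      (continuous_const.mul hS.continuous)
  exact ((hopφ.mul hφt.continuous).add (hopψ.mul hψt.continuous)).add (hopw.mul hwt.continuous)

theorem HnormSq_eq_integral (hφ : ContDiff ℝ 1 (uncurry φ)) (hψ : ContDiff ℝ 1 (uncurry ψ))
    (hw : ContDiff ℝ 1 (uncurry w)) (t : ℝ) :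
    HnormSq ρ₁ ρ₂ b k k₀ ℓ L φ ψ w t =
      ∫ x in (0 : ℝ)..L, energyDensity ρ₁ ρ₂ b k k₀ ℓ φ ψ w x t := by
  have hmn : (0 : WithTop ℕ∞) + 1 ≤ 1 := (zero_add 1).le
  have hint {u : ℝ → ℝ → ℝ} (hu : ContDiff ℝ 0 (uncurry u)) (c : ℝ) :
      IntervalIntegrable (fun x => c * u x t ^ 2) volume 0 L :=
    (((hu.continuous.uncurry_right t).pow 2).const_mul c).intervalIntegrable 0 L
  have h₁ := hint (contDiff_dt hφ hmn) ρ₁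
  have h₂ := h₁.add (hint (contDiff_dt hψ hmn) ρ₂)
  have h₃ := h₂.add (hint (contDiff_dt hw hmn) ρ₁)
  have h₄ := h₃.add (hint (contDiff_dx hψ hmn) b)
  have h₅ := h₄.add (hint (contDiff_shear (ℓ := ℓ) hφ hψ hw hmn) k)
  unfold energyDensity
  rw [intervalIntegral.integral_add h₅ (hint (contDiff_axial hφ hw hmn) k₀),
    intervalIntegral.integral_add h₄ (hint (contDiff_shear hφ hψ hw hmn) k),
    intervalIntegral.integral_add h₃ (hint (contDiff_dx hψ hmn) b),
    intervalIntegral.integral_add h₂ (hint (contDiff_dt hw hmn) ρ₁),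
    intervalIntegral.integral_add h₁ (hint (contDiff_dt hψ hmn) ρ₂)]
  simp only [intervalIntegral.integral_const_mul]
  rfl

theorem velocitySq_le_energyDensity (hρ₁ : 0 < ρ₁) (hρ₂ : 0 < ρ₂) (hb : 0 ≤ b) (hk : 0 ≤ k)
    (hk₀ : 0 ≤ k₀) (x t : ℝ) :
    velocitySq φ ψ w x t ≤ (ρ₁⁻¹ + ρ₂⁻¹) * energyDensity ρ₁ ρ₂ b k k₀ ℓ φ ψ w x t := by
  have hφt : 0 ≤ ρ₁ * dt φ x t ^ 2 := by positivity
  have hψt : 0 ≤ ρ₂ * dt ψ x t ^ 2 := by positivity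
  have hwt : 0 ≤ ρ₁ * dt w x t ^ 2 := by positivity
  have hpot : 0 ≤ b * dx ψ x t ^ 2 + k * shear ℓ φ ψ w x t ^ 2 + k₀ * axial ℓ φ w x t ^ 2 := by
    positivity
  have hφw : dt φ x t ^ 2 + dt w x t ^ 2 ≤ ρ₁⁻¹ * energyDensity ρ₁ ρ₂ b k k₀ ℓ φ ψ w x t :=
    (le_inv_mul_iff₀ hρ₁).2 (by unfold energyDensity; linarith)
  have hψ : dt ψ x t ^ 2 ≤ ρ₂⁻¹ * energyDensity ρ₁ ρ₂ b k k₀ ℓ φ ψ w x t :=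
    (le_inv_mul_iff₀ hρ₂).2 (by unfold energyDensity; linarith)
  unfold velocitySq
  linarith

theorem strainSq_le_energyDensity (hρ₁ : 0 ≤ ρ₁) (hρ₂ : 0 ≤ ρ₂) (hb : 0 < b) (hk : 0 < k)
    (hk₀ : 0 < k₀) (x t : ℝ) :
    strainSq ℓ φ ψ w x t ≤
      (b⁻¹ + k⁻¹ + k₀⁻¹) * energyDensity ρ₁ ρ₂ b k k₀ ℓ φ ψ w x t := by
  have hkin : 0 ≤ ρ₁ * dt φ x t ^ 2 + ρ₂ * dt ψ x t ^ 2 + ρ₁ * dt w x t ^ 2 := by positivity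
  have hbend : 0 ≤ b * dx ψ x t ^ 2 := by positivity
  have hshear : 0 ≤ k * shear ℓ φ ψ w x t ^ 2 := by positivity
  have haxial : 0 ≤ k₀ * axial ℓ φ w x t ^ 2 := by positivity
  have hψx : dx ψ x t ^ 2 ≤ b⁻¹ * energyDensity ρ₁ ρ₂ b k k₀ ℓ φ ψ w x t :=
    (le_inv_mul_iff₀ hb).2 (by unfold energyDensity; linarith)
  have hS : shear ℓ φ ψ w x t ^ 2 ≤ k⁻¹ * energyDensity ρ₁ ρ₂ b k k₀ ℓ φ ψ w x t :=
    (le_inv_mul_iff₀ hk).2 (by unfold energyDensity; linarith)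
  have hN : axial ℓ φ w x t ^ 2 ≤ k₀⁻¹ * energyDensity ρ₁ ρ₂ b k k₀ ℓ φ ψ w x t :=
    (le_inv_mul_iff₀ hk₀).2 (by unfold energyDensity; linarith)
  unfold strainSq
  linarith

theorem dt_shear (hφ : ContDiff ℝ 2 (uncurry φ)) (hψ : Differentiable ℝ (uncurry ψ))
    (hw : Differentiable ℝ (uncurry w)) (x t : ℝ) :
    dt (shear ℓ φ ψ w) x t = dx (dt φ) x t + dt ψ x t + ℓ * dt w x t := by
  have hφx := (contDiff_dx hφ one_add_one_eq_two.le).differentiable one_ne_zero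
  rw [← dt_dx_comm hφ]
  exact (((hasDerivAt_dt hφx x t).add (hasDerivAt_dt hψ x t)).add
    ((hasDerivAt_dt hw x t).const_mul ℓ)).deriv

theorem dt_axial (hφ : Differentiable ℝ (uncurry φ)) (hw : ContDiff ℝ 2 (uncurry w)) (x t : ℝ) :
    dt (axial ℓ φ w) x t = dx (dt w) x t - ℓ * dt φ x t := by
  have hwx := (contDiff_dx hw one_add_one_eq_two.le).differentiable one_ne_zero
  rw [← dt_dx_comm hw]
  exact ((hasDerivAt_dt hwx x t).sub ((hasDerivAt_dt hφ x t).const_mul ℓ)).deriv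

theorem dt_energyDensity_eq_sum (hφ : ContDiff ℝ 2 (uncurry φ)) (hψ : ContDiff ℝ 2 (uncurry ψ))
    (hw : ContDiff ℝ 2 (uncurry w)) (x t : ℝ) :
    dt (energyDensity ρ₁ ρ₂ b k k₀ ℓ φ ψ w) x t =
      ρ₁ * (2 * dt φ x t * dt (dt φ) x t) + ρ₂ * (2 * dt ψ x t * dt (dt ψ) x t)
        + ρ₁ * (2 * dt w x t * dt (dt w) x t) + b * (2 * dx ψ x t * dt (dx ψ) x t)
        + k * (2 * shear ℓ φ ψ w x t * dt (shear ℓ φ ψ w) x t)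
        + k₀ * (2 * axial ℓ φ w x t * dt (axial ℓ φ w) x t) := by
  have h₁ : (1 : WithTop ℕ∞) + 1 ≤ 2 := one_add_one_eq_two.le
  have hsq {u : ℝ → ℝ → ℝ} (hu : ContDiff ℝ 1 (uncurry u)) (c : ℝ) :
      HasDerivAt (fun s => c * u x s ^ 2) (c * (2 * u x t * dt u x t)) t := by
    simpa using ((hasDerivAt_dt (hu.differentiable one_ne_zero) x t).fun_pow 2).const_mul c
  exact ((((((hsq (contDiff_dt hφ h₁) ρ₁).add (hsq (contDiff_dt hψ h₁) ρ₂)).add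
    (hsq (contDiff_dt hw h₁) ρ₁)).add (hsq (contDiff_dx hψ h₁) b)).add
    (hsq (contDiff_shear hφ hψ hw h₁) k)).add (hsq (contDiff_axial hφ hw h₁) k₀)).deriv

theorem dx_energyFlux_eq_sum (hφ : ContDiff ℝ 2 (uncurry φ)) (hψ : ContDiff ℝ 2 (uncurry ψ))
    (hw : ContDiff ℝ 2 (uncurry w)) (x t : ℝ) :
    dx (energyFlux b k k₀ ℓ φ ψ w) x t =
      b * (dx (dx ψ) x t * dt ψ x t + dx ψ x t * dx (dt ψ) x t)
        + k * (dx (shear ℓ φ ψ w) x t * dt φ x t + shear ℓ φ ψ w x t * dx (dt φ) x t)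
        + k₀ * (dx (axial ℓ φ w) x t * dt w x t + axial ℓ φ w x t * dx (dt w) x t) := by
  have h₁ : (1 : WithTop ℕ∞) + 1 ≤ 2 := one_add_one_eq_two.le
  have hmul {u v : ℝ → ℝ → ℝ} (hu : ContDiff ℝ 1 (uncurry u)) (hv : ContDiff ℝ 1 (uncurry v))
      (c : ℝ) : HasDerivAt (fun y => c * (u y t * v y t))
        (c * (dx u x t * v x t + u x t * dx v x t)) x :=
    ((hasDerivAt_dx (hu.differentiable one_ne_zero) x t).mul
      (hasDerivAt_dx (hv.differentiable one_ne_zero) x t)).const_mul c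
  exact (((hmul (contDiff_dx hψ h₁) (contDiff_dt hψ h₁) b).add
    (hmul (contDiff_shear hφ hψ hw h₁) (contDiff_dt hφ h₁) k)).add
    (hmul (contDiff_axial hφ hw h₁) (contDiff_dt hw h₁) k₀)).deriv

theorem dt_energyDensity (hφ : ContDiff ℝ 2 (uncurry φ)) (hψ : ContDiff ℝ 2 (uncurry ψ))
    (hw : ContDiff ℝ 2 (uncurry w)) (x t : ℝ) :
    dt (energyDensity ρ₁ ρ₂ b k k₀ ℓ φ ψ w) x t =
      2 * power ρ₁ ρ₂ b k k₀ ℓ φ ψ w x t + 2 * dx (energyFlux b k k₀ ℓ φ ψ w) x t := by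
  have hφ' := hφ.differentiable two_ne_zero
  have hψ' := hψ.differentiable two_ne_zero
  have hw' := hw.differentiable two_ne_zero
  rw [dt_energyDensity_eq_sum hφ hψ hw, dx_energyFlux_eq_sum hφ hψ hw, dt_dx_comm hψ,
    dt_shear hφ hψ' hw', dt_axial hφ' hw]
  unfold power opφ opψ opw
  ring

theorem hasDerivAt_HnormSq (hφ : ContDiff ℝ 2 (uncurry φ)) (hψ : ContDiff ℝ 2 (uncurry ψ))
    (hw : ContDiff ℝ 2 (uncurry w)) (t : ℝ) :
    HasDerivAt (HnormSq ρ₁ ρ₂ b k k₀ ℓ L φ ψ w)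
      (2 * (∫ x in (0 : ℝ)..L, power ρ₁ ρ₂ b k k₀ ℓ φ ψ w x t)
        + 2 * (energyFlux b k k₀ ℓ φ ψ w L t - energyFlux b k k₀ ℓ φ ψ w 0 t)) t := by
  have h₁ : (1 : WithTop ℕ∞) + 1 ≤ 2 := one_add_one_eq_two.le
  have h₂ : (1 : WithTop ℕ∞) ≤ 2 := one_le_two
  have hflux : ContDiff ℝ 1 (uncurry (energyFlux b k k₀ ℓ φ ψ w)) :=
    contDiff_energyFlux hφ hψ hw h₁
  have hflux_x : Continuous fun x => dx (energyFlux b k k₀ ℓ φ ψ w) x t :=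
    (contDiff_dx hflux (zero_add 1).le).continuous.uncurry_right t
  have hpower : Continuous fun x => power ρ₁ ρ₂ b k k₀ ℓ φ ψ w x t :=
    (continuous_power hφ hψ hw).uncurry_right t
  have hftc : ∫ x in (0 : ℝ)..L, dx (energyFlux b k k₀ ℓ φ ψ w) x t =
      energyFlux b k k₀ ℓ φ ψ w L t - energyFlux b k k₀ ℓ φ ψ w 0 t :=
    intervalIntegral.integral_eq_sub_of_hasDerivAt
      (fun x _ => hasDerivAt_dx (hflux.differentiable one_ne_zero) x t)
      (hflux_x.intervalIntegrable 0 L)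
  rw [funext (HnormSq_eq_integral (hφ.of_le h₂) (hψ.of_le h₂) (hw.of_le h₂)), ← hftc,
    ← intervalIntegral.integral_const_mul, ← intervalIntegral.integral_const_mul,
    ← intervalIntegral.integral_add ((hpower.const_mul 2).intervalIntegrable 0 L)
      ((hflux_x.const_mul 2).intervalIntegrable 0 L)]
  simpa only [dt_energyDensity hφ hψ hw] using
    hasDerivAt_integral_of_contDiff (contDiff_energyDensity hφ hψ hw h₁) 0 L t

theorem hasDerivAt_HnormSq_of_isDirichletField (hφ : IsDirichletField L T φ)
    (hψ : IsDirichletField L T ψ) (hw : IsDirichletField L T w) (ht : t ∈ Ioo 0 T) :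
    HasDerivAt (HnormSq ρ₁ ρ₂ b k k₀ ℓ L φ ψ w)
      (2 * ∫ x in (0 : ℝ)..L, power ρ₁ ρ₂ b k k₀ ℓ φ ψ w x t) t := by
  have hright : energyFlux b k k₀ ℓ φ ψ w L t = 0 := by
    simp [energyFlux, dt_eq_zero_of_forall_mem_Icc hφ.right ht,
      dt_eq_zero_of_forall_mem_Icc hψ.right ht, dt_eq_zero_of_forall_mem_Icc hw.right ht]
  have hleft : energyFlux b k k₀ ℓ φ ψ w 0 t = 0 := by
    simp [energyFlux, dt_eq_zero_of_forall_mem_Icc hφ.left ht,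
      dt_eq_zero_of_forall_mem_Icc hψ.left ht, dt_eq_zero_of_forall_mem_Icc hw.left ht]
  simpa only [hright, hleft, sub_zero, mul_zero, add_zero] using
    hasDerivAt_HnormSq (ρ₁ := ρ₁) (ρ₂ := ρ₂) (b := b) (k := k) (k₀ := k₀) (ℓ := ℓ) (L := L)
      hφ.contDiff hψ.contDiff hw.contDiff t

theorem sum_sq_le_exp_mul_integral_strainSq (hφ : ContDiff ℝ 1 (uncurry φ))
    (hψ : ContDiff ℝ 1 (uncurry ψ)) (hw : ContDiff ℝ 1 (uncurry w)) (hφ₀ : φ 0 t = 0)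
    (hψ₀ : ψ 0 t = 0) (hw₀ : w 0 t = 0) {x : ℝ} (hx : x ∈ Icc 0 L) :
    φ x t ^ 2 + ψ x t ^ 2 + w x t ^ 2 ≤
      Real.exp (2 * L) * ∫ y in (0 : ℝ)..L, strainSq ℓ φ ψ w y t := by
  have hderiv (y : ℝ) : HasDerivAt (fun y => φ y t ^ 2 + ψ y t ^ 2 + w y t ^ 2)
      (2 * φ y t * dx φ y t + 2 * ψ y t * dx ψ y t + 2 * w y t * dx w y t) y := by
    simpa using (((hasDerivAt_dx (hφ.differentiable one_ne_zero) y t).fun_pow 2).fun_add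
      ((hasDerivAt_dx (hψ.differentiable one_ne_zero) y t).fun_pow 2)).fun_add
      ((hasDerivAt_dx (hw.differentiable one_ne_zero) y t).fun_pow 2)
  have hq : Continuous fun y => strainSq ℓ φ ψ w y t :=
    (continuous_strainSq hφ hψ hw).uncurry_right t
  have hq₀ (y : ℝ) : 0 ≤ strainSq ℓ φ ψ w y t := by unfold strainSq; positivity
  -- Written in terms of the strains, the derivative has no `ℓφw` term, whence a rate free of `ℓ`.
  have hle (y : ℝ) : 2 * φ y t * dx φ y t + 2 * ψ y t * dx ψ y t + 2 * w y t * dx w y t ≤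
      2 * (φ y t ^ 2 + ψ y t ^ 2 + w y t ^ 2) + strainSq ℓ φ ψ w y t := by
    unfold strainSq shear axial
    linarith [sq_nonneg (φ y t - (dx φ y t + ψ y t + ℓ * w y t)), sq_nonneg (φ y t + ψ y t),
      sq_nonneg (ψ y t - dx ψ y t), sq_nonneg (w y t - (dx w y t - ℓ * φ y t)), sq_nonneg (w y t)]
  calc φ x t ^ 2 + ψ x t ^ 2 + w x t ^ 2
      ≤ Real.exp (2 * x) * ∫ y in (0 : ℝ)..x, strainSq ℓ φ ψ w y t := by
        simpa [hφ₀, hψ₀, hw₀] using le_exp_mul_add_integral_of_deriv_le zero_le_two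
          (fun y _ => (hderiv y).continuousAt.continuousWithinAt) (fun y _ => hderiv y) hq hq₀
          (fun y _ => hle y) hx
    _ ≤ Real.exp (2 * L) * ∫ y in (0 : ℝ)..L, strainSq ℓ φ ψ w y t := by
        gcongr
        · exact intervalIntegral.integral_nonneg hx.1 fun y _ => hq₀ y
        · exact hx.2
        · exact intervalIntegral.integral_mono_interval le_rfl hx.1 hx.2 (.of_forall hq₀)
            (hq.intervalIntegrable 0 L)

/-- The constant `C` in the embedding `‖(φ, ψ, w)‖²_∞ ≤ C ‖Z‖²_H` of the energy space into the
bounded functions. -/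
noncomputable def sobolevConst (b k k₀ L : ℝ) : ℝ :=
  Real.exp (2 * L) * (b⁻¹ + k⁻¹ + k₀⁻¹)

theorem norm_state_sq_le_sobolevConst_mul_HnormSq (hρ₁ : 0 ≤ ρ₁) (hρ₂ : 0 ≤ ρ₂) (hb : 0 < b)
    (hk : 0 < k) (hk₀ : 0 < k₀) (hφ : IsDirichletField L T φ) (hψ : IsDirichletField L T ψ)
    (hw : IsDirichletField L T w) {x : ℝ} (hx : x ∈ Icc 0 L) (ht : t ∈ Icc 0 T) :
    ‖state φ ψ w x t‖ ^ 2 ≤ sobolevConst b k k₀ L * HnormSq ρ₁ ρ₂ b k k₀ ℓ L φ ψ w t := by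
  have hφ₁ := hφ.contDiff.of_le one_le_two
  have hψ₁ := hψ.contDiff.of_le one_le_two
  have hw₁ := hw.contDiff.of_le one_le_two
  have hdensity : Continuous fun y => energyDensity ρ₁ ρ₂ b k k₀ ℓ φ ψ w y t :=
    (contDiff_energyDensity hφ₁ hψ₁ hw₁ (zero_add 1).le).continuous.uncurry_right t
  have hstrain : ∫ y in (0 : ℝ)..L, strainSq ℓ φ ψ w y t ≤
      (b⁻¹ + k⁻¹ + k₀⁻¹) * HnormSq ρ₁ ρ₂ b k k₀ ℓ L φ ψ w t := by
    rw [HnormSq_eq_integral hφ₁ hψ₁ hw₁, ← intervalIntegral.integral_const_mul]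
    exact intervalIntegral.integral_mono (hx.1.trans hx.2)
      (((continuous_strainSq hφ₁ hψ₁ hw₁).uncurry_right t).intervalIntegrable 0 L)
      ((hdensity.const_mul _).intervalIntegrable 0 L)
      fun y => strainSq_le_energyDensity hρ₁ hρ₂ hb hk hk₀ y t
  calc ‖state φ ψ w x t‖ ^ 2 ≤ φ x t ^ 2 + ψ x t ^ 2 + w x t ^ 2 := norm_sq_le_sum_sq _
    _ ≤ Real.exp (2 * L) * ∫ y in (0 : ℝ)..L, strainSq ℓ φ ψ w y t :=
        sum_sq_le_exp_mul_integral_strainSq hφ₁ hψ₁ hw₁ (hφ.left t ht) (hψ.left t ht)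
          (hw.left t ht) hx
    _ ≤ Real.exp (2 * L) * ((b⁻¹ + k⁻¹ + k₀⁻¹) * HnormSq ρ₁ ρ₂ b k k₀ ℓ L φ ψ w t) := by
        gcongr
    _ = sobolevConst b k k₀ L * HnormSq ρ₁ ρ₂ b k k₀ ℓ L φ ψ w t := (mul_assoc _ _ _).symm

theorem state_mem_closedBall_of_sqrt_HnormSq_le (hρ₁ : 0 ≤ ρ₁) (hρ₂ : 0 ≤ ρ₂) (hb : 0 < b)
    (hk : 0 < k) (hk₀ : 0 < k₀) (hφ : IsDirichletField L T φ) (hψ : IsDirichletField L T ψ)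
    (hw : IsDirichletField L T w) {x R : ℝ} (hx : x ∈ Icc 0 L) (ht : t ∈ Icc 0 T)
    (hR : √(HnormSq ρ₁ ρ₂ b k k₀ ℓ L φ ψ w t) ≤ R) :
    state φ ψ w x t ∈ Metric.closedBall 0 √(sobolevConst b k k₀ L * R ^ 2) := by
  have hC : 0 ≤ sobolevConst b k k₀ L := by unfold sobolevConst; positivity
  have hH : HnormSq ρ₁ ρ₂ b k k₀ ℓ L φ ψ w t ≤ R ^ 2 := (Real.sqrt_le_iff.1 hR).2
  rw [mem_closedBall_zero_iff]
  exact Real.le_sqrt_of_sq_le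
    ((norm_state_sq_le_sobolevConst_mul_HnormSq hρ₁ hρ₂ hb hk hk₀ hφ hψ hw hx ht).trans
      (mul_le_mul_of_nonneg_left hH hC))

theorem integral_velocitySq_le (hρ₁ : 0 < ρ₁) (hρ₂ : 0 < ρ₂) (hb : 0 ≤ b) (hk : 0 ≤ k)
    (hk₀ : 0 ≤ k₀) (hL : 0 ≤ L) (hφ : ContDiff ℝ 1 (uncurry φ)) (hψ : ContDiff ℝ 1 (uncurry ψ))
    (hw : ContDiff ℝ 1 (uncurry w)) (t : ℝ) :
    ∫ x in (0 : ℝ)..L, velocitySq φ ψ w x t ≤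
      (ρ₁⁻¹ + ρ₂⁻¹) * HnormSq ρ₁ ρ₂ b k k₀ ℓ L φ ψ w t := by
  have hdensity : Continuous fun y => energyDensity ρ₁ ρ₂ b k k₀ ℓ φ ψ w y t :=
    (contDiff_energyDensity hφ hψ hw (zero_add 1).le).continuous.uncurry_right t
  rw [HnormSq_eq_integral hφ hψ hw, ← intervalIntegral.integral_const_mul]
  exact intervalIntegral.integral_mono hL
    (((continuous_velocitySq hφ hψ hw).uncurry_right t).intervalIntegrable 0 L)
    ((hdensity.const_mul _).intervalIntegrable 0 L)
    fun x => velocitySq_le_energyDensity hρ₁ hρ₂ hb hk hk₀ x t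

theorem two_mul_integral_power_le (hρ₁ : 0 < ρ₁) (hρ₂ : 0 < ρ₂) (hb : 0 ≤ b) (hk : 0 ≤ k)
    (hk₀ : 0 ≤ k₀) (hL : 0 ≤ L) (hφ : ContDiff ℝ 2 (uncurry φ)) (hψ : ContDiff ℝ 2 (uncurry ψ))
    (hw : ContDiff ℝ 2 (uncurry w)) {D : ℝ}
    (hpower : ∀ x ∈ Icc 0 L, 2 * power ρ₁ ρ₂ b k k₀ ℓ φ ψ w x t ≤
      D * HnormSq ρ₁ ρ₂ b k k₀ ℓ L φ ψ w t + velocitySq φ ψ w x t) :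
    2 * (∫ x in (0 : ℝ)..L, power ρ₁ ρ₂ b k k₀ ℓ φ ψ w x t) ≤
      (D * L + (ρ₁⁻¹ + ρ₂⁻¹)) * HnormSq ρ₁ ρ₂ b k k₀ ℓ L φ ψ w t := by
  have hφ₁ := hφ.of_le one_le_two
  have hψ₁ := hψ.of_le one_le_two
  have hw₁ := hw.of_le one_le_two
  set H := HnormSq ρ₁ ρ₂ b k k₀ ℓ L φ ψ w t
  have hp : Continuous fun x => power ρ₁ ρ₂ b k k₀ ℓ φ ψ w x t :=
    (continuous_power hφ hψ hw).uncurry_right t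
  have hv : Continuous fun x => velocitySq φ ψ w x t :=
    (continuous_velocitySq hφ₁ hψ₁ hw₁).uncurry_right t
  calc 2 * (∫ x in (0 : ℝ)..L, power ρ₁ ρ₂ b k k₀ ℓ φ ψ w x t)
      = ∫ x in (0 : ℝ)..L, 2 * power ρ₁ ρ₂ b k k₀ ℓ φ ψ w x t :=
        (intervalIntegral.integral_const_mul _ _).symm
    _ ≤ ∫ x in (0 : ℝ)..L, (D * H + velocitySq φ ψ w x t) :=
        intervalIntegral.integral_mono_on hL ((hp.const_mul 2).intervalIntegrable 0 L)
          ((continuous_const.add hv).intervalIntegrable 0 L) hpower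
    _ = D * L * H + ∫ x in (0 : ℝ)..L, velocitySq φ ψ w x t := by
        rw [intervalIntegral.integral_add intervalIntegrable_const (hv.intervalIntegrable 0 L),
          intervalIntegral.integral_const, smul_eq_mul]
        ring
    _ ≤ D * L * H + (ρ₁⁻¹ + ρ₂⁻¹) * H := by
        gcongr
        exact integral_velocitySq_le hρ₁ hρ₂ hb hk hk₀ hL hφ₁ hψ₁ hw₁ t
    _ = (D * L + (ρ₁⁻¹ + ρ₂⁻¹)) * H := by ring

theorem HnormSq_le_exp_mul_of_power_le (hρ₁ : 0 < ρ₁) (hρ₂ : 0 < ρ₂) (hb : 0 ≤ b) (hk : 0 ≤ k)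
    (hk₀ : 0 ≤ k₀) (hL : 0 ≤ L) (hφ : IsDirichletField L T φ) (hψ : IsDirichletField L T ψ)
    (hw : IsDirichletField L T w) {D : ℝ} (hD : 0 ≤ D)
    (hpower : ∀ t ∈ Ioo 0 T, ∀ x ∈ Icc 0 L, 2 * power ρ₁ ρ₂ b k k₀ ℓ φ ψ w x t ≤
      D * HnormSq ρ₁ ρ₂ b k k₀ ℓ L φ ψ w t + velocitySq φ ψ w x t) (ht : t ∈ Icc 0 T) :
    HnormSq ρ₁ ρ₂ b k k₀ ℓ L φ ψ w t ≤
      Real.exp ((D * L + (ρ₁⁻¹ + ρ₂⁻¹)) * t) * HnormSq ρ₁ ρ₂ b k k₀ ℓ L φ ψ w 0 := by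
  have hcont : Continuous (HnormSq ρ₁ ρ₂ b k k₀ ℓ L φ ψ w) := continuous_iff_continuousAt.2
    fun s => (hasDerivAt_HnormSq hφ.contDiff hψ.contDiff hw.contDiff s).continuousAt
  have hderiv : ∀ s ∈ Ioo 0 T, HasDerivAt (HnormSq ρ₁ ρ₂ b k k₀ ℓ L φ ψ w)
      (2 * ∫ x in (0 : ℝ)..L, power ρ₁ ρ₂ b k k₀ ℓ φ ψ w x s) s :=
    fun s hs => hasDerivAt_HnormSq_of_isDirichletField hφ hψ hw hs
  have hrate : ∀ s ∈ Ioo 0 T, 2 * (∫ x in (0 : ℝ)..L, power ρ₁ ρ₂ b k k₀ ℓ φ ψ w x s) ≤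
      (D * L + (ρ₁⁻¹ + ρ₂⁻¹)) * HnormSq ρ₁ ρ₂ b k k₀ ℓ L φ ψ w s + 0 := fun s hs => by
    rw [add_zero]
    exact two_mul_integral_power_le hρ₁ hρ₂ hb hk hk₀ hL hφ.contDiff hψ.contDiff hw.contDiff
      (hpower s hs)
  simpa using le_exp_mul_add_integral_of_deriv_le (by positivity) hcont.continuousOn hderiv
    continuous_const (fun _ => le_rfl) hrate ht

end Fields

section Differences

variable {ρ₁ ρ₂ b k k₀ ℓ : ℝ} {φ₁ ψ₁ w₁ φ₂ ψ₂ w₂ : ℝ → ℝ → ℝ}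

theorem shear_sub (hφ₁ : Differentiable ℝ (uncurry φ₁)) (hφ₂ : Differentiable ℝ (uncurry φ₂)) :
    shear ℓ (φ₁ - φ₂) (ψ₁ - ψ₂) (w₁ - w₂) = shear ℓ φ₁ ψ₁ w₁ - shear ℓ φ₂ ψ₂ w₂ := by
  funext x t
  simp only [shear, dx_sub hφ₁ hφ₂, Pi.sub_apply]
  ring

theorem axial_sub (hw₁ : Differentiable ℝ (uncurry w₁)) (hw₂ : Differentiable ℝ (uncurry w₂)) :
    axial ℓ (φ₁ - φ₂) (w₁ - w₂) = axial ℓ φ₁ w₁ - axial ℓ φ₂ w₂ := by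
  funext x t
  simp only [axial, dx_sub hw₁ hw₂, Pi.sub_apply]
  ring

theorem velocitySq_sub (hφ₁ : Differentiable ℝ (uncurry φ₁))
    (hφ₂ : Differentiable ℝ (uncurry φ₂)) (hψ₁ : Differentiable ℝ (uncurry ψ₁))
    (hψ₂ : Differentiable ℝ (uncurry ψ₂)) (hw₁ : Differentiable ℝ (uncurry w₁))
    (hw₂ : Differentiable ℝ (uncurry w₂)) (x t : ℝ) :
    velocitySq (φ₁ - φ₂) (ψ₁ - ψ₂) (w₁ - w₂) x t =
      (dt φ₁ x t - dt φ₂ x t) ^ 2 + (dt ψ₁ x t - dt ψ₂ x t) ^ 2 + (dt w₁ x t - dt w₂ x t) ^ 2 := by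
  rw [velocitySq, dt_sub hφ₁ hφ₂, dt_sub hψ₁ hψ₂, dt_sub hw₁ hw₂]
  rfl

theorem opφ_sub (hφ₁ : ContDiff ℝ 2 (uncurry φ₁)) (hφ₂ : ContDiff ℝ 2 (uncurry φ₂))
    (hψ₁ : ContDiff ℝ 2 (uncurry ψ₁)) (hψ₂ : ContDiff ℝ 2 (uncurry ψ₂))
    (hw₁ : ContDiff ℝ 2 (uncurry w₁)) (hw₂ : ContDiff ℝ 2 (uncurry w₂)) :
    opφ ρ₁ k k₀ ℓ (φ₁ - φ₂) (ψ₁ - ψ₂) (w₁ - w₂) =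
      opφ ρ₁ k k₀ ℓ φ₁ ψ₁ w₁ - opφ ρ₁ k k₀ ℓ φ₂ ψ₂ w₂ := by
  have h₁ : (1 : WithTop ℕ∞) + 1 ≤ 2 := one_add_one_eq_two.le
  funext x t
  simp only [opφ, dt_sub (hφ₁.differentiable two_ne_zero) (hφ₂.differentiable two_ne_zero),
    dt_sub ((contDiff_dt hφ₁ h₁).differentiable one_ne_zero)
      ((contDiff_dt hφ₂ h₁).differentiable one_ne_zero),
    shear_sub (hφ₁.differentiable two_ne_zero) (hφ₂.differentiable two_ne_zero),
    dx_sub ((contDiff_shear hφ₁ hψ₁ hw₁ h₁).differentiable one_ne_zero)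
      ((contDiff_shear hφ₂ hψ₂ hw₂ h₁).differentiable one_ne_zero),
    axial_sub (hw₁.differentiable two_ne_zero) (hw₂.differentiable two_ne_zero), Pi.sub_apply]
  ring

theorem opψ_sub (hφ₁ : Differentiable ℝ (uncurry φ₁)) (hφ₂ : Differentiable ℝ (uncurry φ₂))
    (hψ₁ : ContDiff ℝ 2 (uncurry ψ₁)) (hψ₂ : ContDiff ℝ 2 (uncurry ψ₂)) :
    opψ ρ₂ b k ℓ (φ₁ - φ₂) (ψ₁ - ψ₂) (w₁ - w₂) =
      opψ ρ₂ b k ℓ φ₁ ψ₁ w₁ - opψ ρ₂ b k ℓ φ₂ ψ₂ w₂ := by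
  have h₁ : (1 : WithTop ℕ∞) + 1 ≤ 2 := one_add_one_eq_two.le
  funext x t
  simp only [opψ, dt_sub (hψ₁.differentiable two_ne_zero) (hψ₂.differentiable two_ne_zero),
    dt_sub ((contDiff_dt hψ₁ h₁).differentiable one_ne_zero)
      ((contDiff_dt hψ₂ h₁).differentiable one_ne_zero),
    dx_sub (hψ₁.differentiable two_ne_zero) (hψ₂.differentiable two_ne_zero),
    dx_sub ((contDiff_dx hψ₁ h₁).differentiable one_ne_zero)
      ((contDiff_dx hψ₂ h₁).differentiable one_ne_zero),
    shear_sub hφ₁ hφ₂, Pi.sub_apply]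
  ring

theorem opw_sub (hφ₁ : ContDiff ℝ 2 (uncurry φ₁)) (hφ₂ : ContDiff ℝ 2 (uncurry φ₂))
    (hw₁ : ContDiff ℝ 2 (uncurry w₁)) (hw₂ : ContDiff ℝ 2 (uncurry w₂)) :
    opw ρ₁ k k₀ ℓ (φ₁ - φ₂) (ψ₁ - ψ₂) (w₁ - w₂) =
      opw ρ₁ k k₀ ℓ φ₁ ψ₁ w₁ - opw ρ₁ k k₀ ℓ φ₂ ψ₂ w₂ := by
  have h₁ : (1 : WithTop ℕ∞) + 1 ≤ 2 := one_add_one_eq_two.le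
  funext x t
  simp only [opw, dt_sub (hw₁.differentiable two_ne_zero) (hw₂.differentiable two_ne_zero),
    dt_sub ((contDiff_dt hw₁ h₁).differentiable one_ne_zero)
      ((contDiff_dt hw₂ h₁).differentiable one_ne_zero),
    axial_sub (hw₁.differentiable two_ne_zero) (hw₂.differentiable two_ne_zero),
    dx_sub ((contDiff_axial hφ₁ hw₁ h₁).differentiable one_ne_zero)
      ((contDiff_axial hφ₂ hw₂ h₁).differentiable one_ne_zero),
    shear_sub (hφ₁.differentiable two_ne_zero) (hφ₂.differentiable two_ne_zero), Pi.sub_apply]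
  ring

theorem power_sub (hφ₁ : ContDiff ℝ 2 (uncurry φ₁)) (hφ₂ : ContDiff ℝ 2 (uncurry φ₂))
    (hψ₁ : ContDiff ℝ 2 (uncurry ψ₁)) (hψ₂ : ContDiff ℝ 2 (uncurry ψ₂))
    (hw₁ : ContDiff ℝ 2 (uncurry w₁)) (hw₂ : ContDiff ℝ 2 (uncurry w₂)) (x t : ℝ) :
    power ρ₁ ρ₂ b k k₀ ℓ (φ₁ - φ₂) (ψ₁ - ψ₂) (w₁ - w₂) x t =
      (opφ ρ₁ k k₀ ℓ φ₁ ψ₁ w₁ x t - opφ ρ₁ k k₀ ℓ φ₂ ψ₂ w₂ x t) * (dt φ₁ x t - dt φ₂ x t)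
        + (opψ ρ₂ b k ℓ φ₁ ψ₁ w₁ x t - opψ ρ₂ b k ℓ φ₂ ψ₂ w₂ x t) * (dt ψ₁ x t - dt ψ₂ x t)
        + (opw ρ₁ k k₀ ℓ φ₁ ψ₁ w₁ x t - opw ρ₁ k k₀ ℓ φ₂ ψ₂ w₂ x t)
          * (dt w₁ x t - dt w₂ x t) := by
  have hφ₁' := hφ₁.differentiable two_ne_zero
  have hφ₂' := hφ₂.differentiable two_ne_zero
  rw [power, opφ_sub hφ₁ hφ₂ hψ₁ hψ₂ hw₁ hw₂, opψ_sub hφ₁' hφ₂' hψ₁ hψ₂,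
    opw_sub hφ₁ hφ₂ hw₁ hw₂, dt_sub hφ₁' hφ₂',
    dt_sub (hψ₁.differentiable two_ne_zero) (hψ₂.differentiable two_ne_zero),
    dt_sub (hw₁.differentiable two_ne_zero) (hw₂.differentiable two_ne_zero)]
  rfl

end Differences

section Solutions

/-- The reaction terms `f₁, f₂, f₃` as one map on the space of pointwise states. -/
def reaction (f₁ f₂ f₃ : ℝ → ℝ → ℝ → ℝ) (z : ℝ × ℝ × ℝ) : ℝ × ℝ × ℝ :=
  (f₁ z.1 z.2.1 z.2.2, f₂ z.1 z.2.1 z.2.2, f₃ z.1 z.2.1 z.2.2)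

variable {ρ₁ ρ₂ k k₀ b ℓ L T x t : ℝ} {a₁ a₂ a₃ g₁ g₂ g₃ : ℝ → ℝ} {f₁ f₂ f₃ : ℝ → ℝ → ℝ → ℝ}
  {φ ψ w φ₁ ψ₁ w₁ φ₂ ψ₂ w₂ : ℝ → ℝ → ℝ}

theorem isDirichletField_of_isBresseSolution
    (h : IsBresseSolution 2 ρ₁ ρ₂ k k₀ b ℓ L T a₁ a₂ a₃ g₁ g₂ g₃ f₁ f₂ f₃ φ ψ w) :
    IsDirichletField L T φ ∧ IsDirichletField L T ψ ∧ IsDirichletField L T w := by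
  obtain ⟨hφ, hψ, hw, hbdry, -⟩ := h
  exact ⟨⟨hφ, fun t ht => (hbdry t ht).1, fun t ht => (hbdry t ht).2.1⟩,
    ⟨hψ, fun t ht => (hbdry t ht).2.2.1, fun t ht => (hbdry t ht).2.2.2.1⟩,
    ⟨hw, fun t ht => (hbdry t ht).2.2.2.2.1, fun t ht => (hbdry t ht).2.2.2.2.2⟩⟩

theorem two_mul_power_sub_le (hg₁ : Monotone g₁) (hg₂ : Monotone g₂) (hg₃ : Monotone g₃)
    (ha₁ : 0 ≤ a₁ x) (ha₂ : 0 ≤ a₂ x) (ha₃ : 0 ≤ a₃ x)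
    (h₁ : IsBresseSolution 2 ρ₁ ρ₂ k k₀ b ℓ L T a₁ a₂ a₃ g₁ g₂ g₃ f₁ f₂ f₃ φ₁ ψ₁ w₁)
    (h₂ : IsBresseSolution 2 ρ₁ ρ₂ k k₀ b ℓ L T a₁ a₂ a₃ g₁ g₂ g₃ f₁ f₂ f₃ φ₂ ψ₂ w₂)
    (hx : x ∈ Icc 0 L) (ht : t ∈ Icc 0 T) {Λ : NNReal} {s : Set (ℝ × ℝ × ℝ)}
    (hf : LipschitzOnWith Λ (reaction f₁ f₂ f₃) s) (hs₁ : state φ₁ ψ₁ w₁ x t ∈ s)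
    (hs₂ : state φ₂ ψ₂ w₂ x t ∈ s) :
    2 * power ρ₁ ρ₂ b k k₀ ℓ (φ₁ - φ₂) (ψ₁ - ψ₂) (w₁ - w₂) x t ≤
      3 * Λ ^ 2 * ‖state (φ₁ - φ₂) (ψ₁ - ψ₂) (w₁ - w₂) x t‖ ^ 2
        + velocitySq (φ₁ - φ₂) (ψ₁ - ψ₂) (w₁ - w₂) x t := by
  obtain ⟨hφ₁, hψ₁, hw₁⟩ := isDirichletField_of_isBresseSolution h₁
  obtain ⟨hφ₂, hψ₂, hw₂⟩ := isDirichletField_of_isBresseSolution h₂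
  obtain ⟨eqφ₁, eqψ₁, eqw₁⟩ := h₁.2.2.2.2 x hx t ht
  obtain ⟨eqφ₂, eqψ₂, eqw₂⟩ := h₂.2.2.2.2 x hx t ht
  have hφ : 2 * ((opφ ρ₁ k k₀ ℓ φ₁ ψ₁ w₁ x t - opφ ρ₁ k k₀ ℓ φ₂ ψ₂ w₂ x t)
      * (dt φ₁ x t - dt φ₂ x t)) ≤ _ := two_mul_sub_mul_sub_le_of_damped hg₁ ha₁ eqφ₁ eqφ₂
  have hψ : 2 * ((opψ ρ₂ b k ℓ φ₁ ψ₁ w₁ x t - opψ ρ₂ b k ℓ φ₂ ψ₂ w₂ x t)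
      * (dt ψ₁ x t - dt ψ₂ x t)) ≤ _ := two_mul_sub_mul_sub_le_of_damped hg₂ ha₂ eqψ₁ eqψ₂
  have hw : 2 * ((opw ρ₁ k k₀ ℓ φ₁ ψ₁ w₁ x t - opw ρ₁ k k₀ ℓ φ₂ ψ₂ w₂ x t)
      * (dt w₁ x t - dt w₂ x t)) ≤ _ := two_mul_sub_mul_sub_le_of_damped hg₃ ha₃ eqw₁ eqw₂
  have hreaction : (f₁ (φ₁ x t) (ψ₁ x t) (w₁ x t) - f₁ (φ₂ x t) (ψ₂ x t) (w₂ x t)) ^ 2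
      + (f₂ (φ₁ x t) (ψ₁ x t) (w₁ x t) - f₂ (φ₂ x t) (ψ₂ x t) (w₂ x t)) ^ 2
      + (f₃ (φ₁ x t) (ψ₁ x t) (w₁ x t) - f₃ (φ₂ x t) (ψ₂ x t) (w₂ x t)) ^ 2 ≤
        3 * Λ ^ 2 * ‖state (φ₁ - φ₂) (ψ₁ - ψ₂) (w₁ - w₂) x t‖ ^ 2 :=
    sum_sq_sub_le_of_lipschitzOnWith hf hs₁ hs₂
  rw [power_sub hφ₁.contDiff hφ₂.contDiff hψ₁.contDiff hψ₂.contDiff hw₁.contDiff hw₂.contDiff,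
    velocitySq_sub (hφ₁.contDiff.differentiable two_ne_zero)
      (hφ₂.contDiff.differentiable two_ne_zero) (hψ₁.contDiff.differentiable two_ne_zero)
      (hψ₂.contDiff.differentiable two_ne_zero) (hw₁.contDiff.differentiable two_ne_zero)
      (hw₂.contDiff.differentiable two_ne_zero)]
  linarith

end Solutions

end Bresse

open Bresse in
theorem stmt_16_general (ρ₁ ρ₂ k k₀ b ℓ L R : ℝ) (hρ₁ : 0 < ρ₁) (hρ₂ : 0 < ρ₂) (hk : 0 < k)
    (hk₀ : 0 < k₀) (hb : 0 < b) (hL : 0 ≤ L) (f₁ f₂ f₃ : ℝ → ℝ → ℝ → ℝ)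
    (hf₁ : LocallyLipschitz fun z : ℝ × ℝ × ℝ => f₁ z.1 z.2.1 z.2.2)
    (hf₂ : LocallyLipschitz fun z : ℝ × ℝ × ℝ => f₂ z.1 z.2.1 z.2.2)
    (hf₃ : LocallyLipschitz fun z : ℝ × ℝ × ℝ => f₃ z.1 z.2.1 z.2.2)
    (g₁ g₂ g₃ : ℝ → ℝ) (hg₁ : Monotone g₁) (hg₂ : Monotone g₂) (hg₃ : Monotone g₃)
    (a₁ a₂ a₃ : ℝ → ℝ) (ha₁ : ∀ x ∈ Icc 0 L, 0 ≤ a₁ x) (ha₂ : ∀ x ∈ Icc 0 L, 0 ≤ a₂ x)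
    (ha₃ : ∀ x ∈ Icc 0 L, 0 ≤ a₃ x) :
    ∃ K : ℝ, 0 < K ∧ ∀ (T : ℝ) (φ₁ ψ₁ w₁ φ₂ ψ₂ w₂ : ℝ → ℝ → ℝ),
      IsBresseSolution 2 ρ₁ ρ₂ k k₀ b ℓ L T a₁ a₂ a₃ g₁ g₂ g₃ f₁ f₂ f₃ φ₁ ψ₁ w₁ →
      IsBresseSolution 2 ρ₁ ρ₂ k k₀ b ℓ L T a₁ a₂ a₃ g₁ g₂ g₃ f₁ f₂ f₃ φ₂ ψ₂ w₂ →
      (∀ t ∈ Icc 0 T, √(HnormSq ρ₁ ρ₂ b k k₀ ℓ L φ₁ ψ₁ w₁ t) ≤ R) →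
      (∀ t ∈ Icc 0 T, √(HnormSq ρ₁ ρ₂ b k k₀ ℓ L φ₂ ψ₂ w₂ t) ≤ R) →
      ∀ t ∈ Icc 0 T, HnormSq ρ₁ ρ₂ b k k₀ ℓ L (φ₁ - φ₂) (ψ₁ - ψ₂) (w₁ - w₂) t ≤
        Real.exp (K * t) * HnormSq ρ₁ ρ₂ b k k₀ ℓ L (φ₁ - φ₂) (ψ₁ - ψ₂) (w₁ - w₂) 0 := by
  obtain ⟨Λ, hΛ⟩ : ∃ Λ, LipschitzOnWith Λ (reaction f₁ f₂ f₃)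
      (Metric.closedBall 0 √(sobolevConst b k k₀ L * R ^ 2)) :=
    (hf₁.prodMk (hf₂.prodMk hf₃)).locallyLipschitzOn.exists_lipschitzOnWith_of_compact
      (isCompact_closedBall _ _)
  have hC : 0 ≤ sobolevConst b k k₀ L := by unfold sobolevConst; positivity
  refine ⟨3 * Λ ^ 2 * sobolevConst b k k₀ L * L + (ρ₁⁻¹ + ρ₂⁻¹), by positivity, ?_⟩
  intro T φ₁ ψ₁ w₁ φ₂ ψ₂ w₂ h₁ h₂ hR₁ hR₂ t ht
  obtain ⟨hφ₁, hψ₁, hw₁⟩ := isDirichletField_of_isBresseSolution h₁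
  obtain ⟨hφ₂, hψ₂, hw₂⟩ := isDirichletField_of_isBresseSolution h₂
  refine HnormSq_le_exp_mul_of_power_le hρ₁ hρ₂ hb.le hk.le hk₀.le hL (hφ₁.sub hφ₂)
    (hψ₁.sub hψ₂) (hw₁.sub hw₂) (by positivity) (fun s hs x hx => ?_) ht
  have hs' := Ioo_subset_Icc_self hs
  have hstate₁ := state_mem_closedBall_of_sqrt_HnormSq_le hρ₁.le hρ₂.le hb hk hk₀ hφ₁ hψ₁
    hw₁ hx hs' (hR₁ s hs')
  have hstate₂ := state_mem_closedBall_of_sqrt_HnormSq_le hρ₁.le hρ₂.le hb hk hk₀ hφ₂ hψ₂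
    hw₂ hx hs' (hR₂ s hs')
  calc 2 * power ρ₁ ρ₂ b k k₀ ℓ (φ₁ - φ₂) (ψ₁ - ψ₂) (w₁ - w₂) x s
      ≤ 3 * Λ ^ 2 * ‖state (φ₁ - φ₂) (ψ₁ - ψ₂) (w₁ - w₂) x s‖ ^ 2
          + velocitySq (φ₁ - φ₂) (ψ₁ - ψ₂) (w₁ - w₂) x s :=
        two_mul_power_sub_le hg₁ hg₂ hg₃ (ha₁ x hx) (ha₂ x hx) (ha₃ x hx) h₁ h₂ hx hs' hΛ
          hstate₁ hstate₂
    _ ≤ 3 * Λ ^ 2 * (sobolevConst b k k₀ L *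
            HnormSq ρ₁ ρ₂ b k k₀ ℓ L (φ₁ - φ₂) (ψ₁ - ψ₂) (w₁ - w₂) s)
          + velocitySq (φ₁ - φ₂) (ψ₁ - ψ₂) (w₁ - w₂) x s := by
        gcongr
        exact norm_state_sq_le_sobolevConst_mul_HnormSq hρ₁.le hρ₂.le hb hk hk₀ (hφ₁.sub hφ₂)
          (hψ₁.sub hψ₂) (hw₁.sub hw₂) hx hs'
    _ = 3 * Λ ^ 2 * sobolevConst b k k₀ L *
            HnormSq ρ₁ ρ₂ b k k₀ ℓ L (φ₁ - φ₂) (ψ₁ - ψ₂) (w₁ - w₂) s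
          + velocitySq (φ₁ - φ₂) (ψ₁ - ψ₂) (w₁ - w₂) x s := by ring

/-- Locally Lipschitz dependence on initial data. Assume
`f₁,f₂,f₃ ∈ C¹(ℝ³)` with `|∇fᵢ(u,v,w)| ≤ c_f(1+|u|^{p−1}+|v|^{p−1}+|w|^{p−1})`,
`c_f > 0`, `p ≥ 1`; `g₁,g₂,g₃ ∈ C¹(ℝ)` monotone increasing with `gᵢ(0) = 0` and
`m ≤ gᵢ' ≤ M`, `0 < m ≤ M`; `a₁,a₂,a₃ ∈ L^∞(0,L)` nonnegative. Let `R > 0`. Then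
there exist `C_R, K_R > 0`, depending only on `R` and the data, such that any two
`C²` classical solutions `Z¹, Z²` of the Bresse system on `[0,L]×[0,T]` with
`∥Zⁱ(t)∥_H ≤ R` on `[0,T]` satisfy
`∥Z¹(t) − Z²(t)∥²_H ≤ C_R e^{K_R t} ∥Z¹(0) − Z²(0)∥²_H` for all `t ∈ [0,T]`. -/
theorem stmt_16 (ρ₁ ρ₂ k k₀ b ℓ L T : ℝ)
    (hρ₁ : 0 < ρ₁) (hρ₂ : 0 < ρ₂) (hk : 0 < k) (hk₀ : 0 < k₀) (hb : 0 < b)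
    (hℓ : 0 < ℓ) (hL : 0 < L) (hT : 0 < T)
    (f₁ f₂ f₃ : ℝ → ℝ → ℝ → ℝ) (c_f pexp : ℝ) (hcf : 0 < c_f) (hp : 1 ≤ pexp)
    (hf₁ : ContDiff ℝ 1 (fun z : ℝ × ℝ × ℝ => f₁ z.1 z.2.1 z.2.2))
    (hf₂ : ContDiff ℝ 1 (fun z : ℝ × ℝ × ℝ => f₂ z.1 z.2.1 z.2.2))
    (hf₃ : ContDiff ℝ 1 (fun z : ℝ × ℝ × ℝ => f₃ z.1 z.2.1 z.2.2))
    (hdf₁ : ∀ z : ℝ × ℝ × ℝ, ‖fderiv ℝ (fun q : ℝ × ℝ × ℝ => f₁ q.1 q.2.1 q.2.2) z‖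
      ≤ c_f * (1 + |z.1| ^ (pexp - 1) + |z.2.1| ^ (pexp - 1) + |z.2.2| ^ (pexp - 1)))
    (hdf₂ : ∀ z : ℝ × ℝ × ℝ, ‖fderiv ℝ (fun q : ℝ × ℝ × ℝ => f₂ q.1 q.2.1 q.2.2) z‖
      ≤ c_f * (1 + |z.1| ^ (pexp - 1) + |z.2.1| ^ (pexp - 1) + |z.2.2| ^ (pexp - 1)))
    (hdf₃ : ∀ z : ℝ × ℝ × ℝ, ‖fderiv ℝ (fun q : ℝ × ℝ × ℝ => f₃ q.1 q.2.1 q.2.2) z‖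
      ≤ c_f * (1 + |z.1| ^ (pexp - 1) + |z.2.1| ^ (pexp - 1) + |z.2.2| ^ (pexp - 1)))
    (g₁ g₂ g₃ : ℝ → ℝ) (m M : ℝ) (hm : 0 < m) (hmM : m ≤ M)
    (hg₁ : ContDiff ℝ 1 g₁ ∧ Monotone g₁ ∧ g₁ 0 = 0 ∧
      ∀ s, m ≤ deriv g₁ s ∧ deriv g₁ s ≤ M)
    (hg₂ : ContDiff ℝ 1 g₂ ∧ Monotone g₂ ∧ g₂ 0 = 0 ∧
      ∀ s, m ≤ deriv g₂ s ∧ deriv g₂ s ≤ M)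
    (hg₃ : ContDiff ℝ 1 g₃ ∧ Monotone g₃ ∧ g₃ 0 = 0 ∧
      ∀ s, m ≤ deriv g₃ s ∧ deriv g₃ s ≤ M)
    (a₁ a₂ a₃ : ℝ → ℝ)
    (ha₁ : Measurable a₁ ∧ (∀ x, 0 ≤ a₁ x) ∧ ∃ A, ∀ x, a₁ x ≤ A)
    (ha₂ : Measurable a₂ ∧ (∀ x, 0 ≤ a₂ x) ∧ ∃ A, ∀ x, a₂ x ≤ A)
    (ha₃ : Measurable a₃ ∧ (∀ x, 0 ≤ a₃ x) ∧ ∃ A, ∀ x, a₃ x ≤ A)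
    (R : ℝ) (hR : 0 < R) :
    ∃ C_R K_R : ℝ, 0 < C_R ∧ 0 < K_R ∧
      ∀ φ₁' ψ₁' w₁' φ₂' ψ₂' w₂' : ℝ → ℝ → ℝ,
        IsBresseSolution 2 ρ₁ ρ₂ k k₀ b ℓ L T a₁ a₂ a₃ g₁ g₂ g₃ f₁ f₂ f₃
          φ₁' ψ₁' w₁' →
        IsBresseSolution 2 ρ₁ ρ₂ k k₀ b ℓ L T a₁ a₂ a₃ g₁ g₂ g₃ f₁ f₂ f₃
          φ₂' ψ₂' w₂' →
        (∀ t ∈ Set.Icc (0:ℝ) T,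
          Real.sqrt (HnormSq ρ₁ ρ₂ b k k₀ ℓ L φ₁' ψ₁' w₁' t) ≤ R) →
        (∀ t ∈ Set.Icc (0:ℝ) T,
          Real.sqrt (HnormSq ρ₁ ρ₂ b k k₀ ℓ L φ₂' ψ₂' w₂' t) ≤ R) →
        ∀ t ∈ Set.Icc (0:ℝ) T,
          HnormSq ρ₁ ρ₂ b k k₀ ℓ L
              (fun x s => φ₁' x s - φ₂' x s)
              (fun x s => ψ₁' x s - ψ₂' x s)
              (fun x s => w₁' x s - w₂' x s) t
            ≤ C_R * Real.exp (K_R * t) *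
              HnormSq ρ₁ ρ₂ b k k₀ ℓ L
                (fun x s => φ₁' x s - φ₂' x s)
                (fun x s => ψ₁' x s - ψ₂' x s)
                (fun x s => w₁' x s - w₂' x s) 0 := by
  obtain ⟨K, hK, h⟩ := stmt_16_general ρ₁ ρ₂ k k₀ b ℓ L R hρ₁ hρ₂ hk hk₀ hb hL.le f₁ f₂ f₃
    hf₁.locallyLipschitz hf₂.locallyLipschitz hf₃.locallyLipschitz g₁ g₂ g₃ hg₁.2.1 hg₂.2.1 hg₃.2.1
    a₁ a₂ a₃ (fun x _ => ha₁.2.1 x) (fun x _ => ha₂.2.1 x) (fun x _ => ha₃.2.1 x)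
  refine ⟨1, K, one_pos, hK, ?_⟩
  simp only [one_mul]
  exact h T
end

section
/- (Boundedness of the stationary set.) Let L, ℓ, k, k₀, b > 0 and let β > 0 be a constant such that ∫₀^L(|φ_x|²+|ψ_x|²+|w_x|²)dx ≤ β[b∥ψ_x∥² + k∥φ_x+ψ+ℓw∥² + k₀∥w_x−ℓφ∥²] for all C¹ triples (φ,ψ,w) vanishing at x = 0 and x = L. Assume f₁,f₂,f₃ ∈ C¹(ℝ³) admit F ∈ C¹(ℝ³) with ∇F = (f₁,f₂,f₃) satisfying ∇F(u,v,w)·(u,v,w) ≥ F(u,v,w) − α(|u|²+|v|²+|w|²) − c_F and F(u,v,w) ≥ −α(|u|²+|v|²+|w|²) − c_F for all u,v,w, with 0 ≤ α < π²/(2βL²) and c_F > 0. Then every C² solution (φ,ψ,w) on [0,L] of the stationary Bresse system −k(φ_x+ψ+ℓw)_x − k₀ℓ(w_x−ℓφ) + f₁(φ,ψ,w) = 0, −bψ_xx + k(φ_x+ψ+ℓw) + f₂(φ,ψ,w) = 0, −k₀(w_x−ℓφ)_x + kℓ(φ_x+ψ+ℓw) + f₃(φ,ψ,w) = 0, with φ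 = ψ = w = 0 at x = 0 and x = L, satisfies [1 − 2αβL²/π²] (∥φ_x∥² + ∥ψ_x∥² + ∥w_x∥²) ≤ 2βc_F L. -/
open MeasureTheory

/-!
Testing the three equations with `φ`, `ψ`, `w` and integrating by parts shows that the elastic
energy equals `-∫ (f₁φ + f₂ψ + f₃w)`. Adding the two bounds on `F` eliminates the potential and
gives `f₁φ + f₂ψ + f₃w ≥ -2α(φ² + ψ² + w²) - 2c_F`, so the energy is at most
`2α(‖φ‖² + ‖ψ‖² + ‖w‖²) + 2c_F L`. The inequality defining `β` bounds the derivatives by the energy,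
and the Poincaré inequality with the sharp constant `L/π` absorbs the quadratic term.

The Poincaré inequality follows from a Riccati argument: if `v' = v² + q` on `[a, b]`, then
`u'² - qu² = (u' + vu)² - (vu²)'`, and the last term integrates to zero. Taking
`v = c tan (c(x - (a + b)/2))` gives `q = c²` for every `c < π/(b - a)`, and then `c → π/(b - a)`.
-/

open Set Filter Topology

lemma integral_mul_sq_le_integral_deriv_sq_of_riccati {a b : ℝ} (hab : a ≤ b) {u v q : ℝ → ℝ}
    (hu : AbsolutelyContinuousOnInterval u a b) (hua : u a = 0) (hub : u b = 0)
    (hu' : IntervalIntegrable (fun x => deriv u x ^ 2) volume a b)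
    (hv : AbsolutelyContinuousOnInterval v a b)
    (hvq : ∀ᵐ x, x ∈ Icc a b → deriv v x = v x ^ 2 + q x) :
    ∫ x in a..b, q x * u x ^ 2 ≤ ∫ x in a..b, deriv u x ^ 2 := by
  let W : ℝ → ℝ := v * (u * u)
  have hW : AbsolutelyContinuousOnInterval W a b := hv.mul (hu.mul hu)
  have integral_deriv_W : ∫ x in a..b, deriv W x = 0 := by
    simp [hW.integral_deriv_eq_sub, W, hua, hub]
  have deriv_W : ∀ᵐ x, x ∈ Icc a b →
      deriv W x = (v x ^ 2 + q x) * u x ^ 2 + v x * (2 * u x * deriv u x) := by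
    rw [← uIcc_of_le hab] at hvq ⊢
    filter_upwards [hu.ae_differentiableAt, hv.ae_differentiableAt, hvq] with x hux hvx hvqx hx
    rw [deriv_mul (hvx hx) ((hux hx).mul (hux hx)), deriv_mul (hux hx) (hux hx), hvqx hx]
    simp only [Pi.mul_apply]
    ring
  have integrable_left : IntervalIntegrable (fun x => q x * u x ^ 2) volume a b := by
    have hq : IntervalIntegrable q volume a b := by
      refine (hv.intervalIntegrable_deriv.sub
        (hv.continuousOn.pow 2).intervalIntegrable).congr_ae ?_
      rw [uIoc_of_le hab]
      filter_upwards [ae_restrict_of_ae hvq, ae_restrict_mem measurableSet_Ioc] with x hvqx hx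
      simp [hvqx (Ioc_subset_Icc_self hx)]
    exact hq.mul_continuousOn (hu.continuousOn.pow 2)
  calc ∫ x in a..b, q x * u x ^ 2
      = ∫ x in a..b, (q x * u x ^ 2 - deriv W x) := by
        rw [intervalIntegral.integral_sub integrable_left hW.intervalIntegrable_deriv,
          integral_deriv_W, sub_zero]
    _ ≤ ∫ x in a..b, deriv u x ^ 2 := by
        refine intervalIntegral.integral_mono_ae_restrict hab
          (integrable_left.sub hW.intervalIntegrable_deriv) hu' ?_
        filter_upwards [ae_restrict_of_ae deriv_W, ae_restrict_mem measurableSet_Icc] with x hWx hx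
        rw [hWx hx]
        linarith [sq_nonneg (deriv u x + v x * u x)]

lemma hasDerivAt_const_mul_tan {c m x : ℝ} (hx : Real.cos (c * (x - m)) ≠ 0) :
    HasDerivAt (fun y => c * Real.tan (c * (y - m)))
      ((c * Real.tan (c * (x - m))) ^ 2 + c ^ 2) x := by
  have inner : HasDerivAt (fun y => c * (y - m)) c x := by
    simpa using ((hasDerivAt_id x).sub_const m).const_mul c
  refine (((Real.hasDerivAt_tan hx).comp x inner).const_mul c).congr_deriv ?_
  rw [← Real.inv_one_add_tan_sq hx, one_div, inv_inv]
  ring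

lemma cos_mul_sub_midpoint_ne_zero {a b c x : ℝ} (hc : 0 ≤ c) (hcab : c * (b - a) < Real.pi)
    (hx : x ∈ Icc a b) : Real.cos (c * (x - (a + b) / 2)) ≠ 0 := by
  refine (Real.cos_pos_of_mem_Ioo ⟨?_, ?_⟩).ne'
  · nlinarith [mul_nonneg hc (sub_nonneg.2 hx.1)]
  · nlinarith [mul_nonneg hc (sub_nonneg.2 hx.2)]

lemma sq_mul_integral_sq_le_integral_deriv_sq {a b c : ℝ} (hab : a ≤ b) (hc : 0 ≤ c)
    (hcab : c * (b - a) < Real.pi) {u : ℝ → ℝ} (hu : AbsolutelyContinuousOnInterval u a b)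
    (hua : u a = 0) (hub : u b = 0)
    (hu' : IntervalIntegrable (fun x => deriv u x ^ 2) volume a b) :
    c ^ 2 * ∫ x in a..b, u x ^ 2 ≤ ∫ x in a..b, deriv u x ^ 2 := by
  have cos_ne_zero : ∀ x ∈ Icc a b, Real.cos (c * (x - (a + b) / 2)) ≠ 0 := fun _ hx =>
    cos_mul_sub_midpoint_ne_zero hc hcab hx
  have tan_contDiffOn : ContDiffOn ℝ 1 (fun x => c * Real.tan (c * (x - (a + b) / 2)))
      (uIcc a b) := by
    intro x hx
    rw [uIcc_of_le hab] at hx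
    have tan_contDiffAt : ContDiffAt ℝ 1 Real.tan (c * (x - (a + b) / 2)) :=
      Real.contDiffAt_tan.2 (cos_ne_zero x hx)
    have inner : ContDiffAt ℝ 1 (fun y => c * (y - (a + b) / 2)) x := by fun_prop
    exact (contDiffAt_const.mul (tan_contDiffAt.comp x inner)).contDiffWithinAt
  rw [← intervalIntegral.integral_const_mul]
  exact integral_mul_sq_le_integral_deriv_sq_of_riccati hab hu hua hub hu'
    tan_contDiffOn.absolutelyContinuousOnInterval
    (.of_forall fun x hx => (hasDerivAt_const_mul_tan (cos_ne_zero x hx)).deriv)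

theorem poincare_inequality {a b : ℝ} (hab : a ≤ b) {u : ℝ → ℝ}
    (hu : AbsolutelyContinuousOnInterval u a b) (hua : u a = 0) (hub : u b = 0)
    (hu' : IntervalIntegrable (fun x => deriv u x ^ 2) volume a b) :
    ∫ x in a..b, u x ^ 2 ≤ ((b - a) / Real.pi) ^ 2 * ∫ x in a..b, deriv u x ^ 2 := by
  obtain rfl | hlt := hab.eq_or_lt
  · simp
  have hpos : 0 < b - a := sub_pos.2 hlt
  have sharp : (Real.pi / (b - a)) ^ 2 * ∫ x in a..b, u x ^ 2 ≤ ∫ x in a..b, deriv u x ^ 2 := by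
    have tendsto_left : Tendsto (fun c : ℝ => c ^ 2 * ∫ x in a..b, u x ^ 2)
        (𝓝[<] (Real.pi / (b - a))) (𝓝 ((Real.pi / (b - a)) ^ 2 * ∫ x in a..b, u x ^ 2)) :=
      ((continuous_pow 2).mul continuous_const).continuousWithinAt
    refine le_of_tendsto tendsto_left ?_
    filter_upwards [Ioo_mem_nhdsLT (div_pos Real.pi_pos hpos)] with c hc
    exact sq_mul_integral_sq_le_integral_deriv_sq hab hc.1.le ((lt_div_iff₀ hpos).1 hc.2)
      hu hua hub hu'
  rwa [← inv_div, inv_pow, inv_mul_le_iff₀ (by positivity)] at sharp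

theorem poincare_inequality_of_contDiff {a b : ℝ} (hab : a ≤ b) {u : ℝ → ℝ}
    (hu : ContDiff ℝ 1 u) (hua : u a = 0) (hub : u b = 0) :
    ∫ x in a..b, u x ^ 2 ≤ ((b - a) / Real.pi) ^ 2 * ∫ x in a..b, deriv u x ^ 2 :=
  poincare_inequality hab hu.contDiffOn.absolutelyContinuousOnInterval hua hub
    (((hu.continuous_deriv le_rfl).pow 2).intervalIntegrable a b)

lemma integral_add_add {f g h : ℝ → ℝ} {μ : Measure ℝ} {a b : ℝ}
    (hf : IntervalIntegrable f μ a b) (hg : IntervalIntegrable g μ a b)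
    (hh : IntervalIntegrable h μ a b) :
    ∫ x in a..b, (f x + g x + h x) ∂μ =
      (∫ x in a..b, f x ∂μ) + (∫ x in a..b, g x ∂μ) + ∫ x in a..b, h x ∂μ := by
  rw [intervalIntegral.integral_add (hf.add hg) hh, intervalIntegral.integral_add hf hg]

lemma integral_sum_sq_le_integral_sum_deriv_sq {a b : ℝ} (hab : a ≤ b) {u v w : ℝ → ℝ}
    (hu : ContDiff ℝ 1 u) (hv : ContDiff ℝ 1 v) (hw : ContDiff ℝ 1 w)
    (hua : u a = 0) (hub : u b = 0) (hva : v a = 0) (hvb : v b = 0)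
    (hwa : w a = 0) (hwb : w b = 0) :
    ∫ x in a..b, (u x ^ 2 + v x ^ 2 + w x ^ 2) ≤
      ((b - a) / Real.pi) ^ 2 * ∫ x in a..b, (deriv u x ^ 2 + deriv v x ^ 2 + deriv w x ^ 2) := by
  have sq_integrable {f : ℝ → ℝ} (hf : ContDiff ℝ 1 f) :
      IntervalIntegrable (fun x => f x ^ 2) volume a b :=
    (hf.continuous.pow 2).intervalIntegrable a b
  have deriv_sq_integrable {f : ℝ → ℝ} (hf : ContDiff ℝ 1 f) :
      IntervalIntegrable (fun x => deriv f x ^ 2) volume a b :=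
    ((hf.continuous_deriv le_rfl).pow 2).intervalIntegrable a b
  rw [integral_add_add (sq_integrable hu) (sq_integrable hv) (sq_integrable hw),
    integral_add_add (deriv_sq_integrable hu) (deriv_sq_integrable hv) (deriv_sq_integrable hw),
    mul_add, mul_add]
  exact add_le_add_three (poincare_inequality_of_contDiff hab hu hua hub)
    (poincare_inequality_of_contDiff hab hv hva hvb)
    (poincare_inequality_of_contDiff hab hw hwa hwb)

/-- The shear strain `φ_x + ψ + ℓw` of a Bresse beam of curvature `ℓ`. -/
noncomputable def shearStrain (ℓ : ℝ) (φ ψ w : ℝ → ℝ) (x : ℝ) : ℝ := deriv φ x + ψ x + ℓ * w x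

/-- The axial strain `w_x - ℓφ` of a Bresse beam of curvature `ℓ`. -/
noncomputable def axialStrain (ℓ : ℝ) (φ w : ℝ → ℝ) (x : ℝ) : ℝ := deriv w x - ℓ * φ x

/-- The pointwise elastic energy `bψ_x² + k(φ_x + ψ + ℓw)² + k₀(w_x - ℓφ)²` of a Bresse beam,
without the customary factor `1/2`. -/
noncomputable def bresseEnergyDensity (k k₀ b ℓ : ℝ) (φ ψ w : ℝ → ℝ) (x : ℝ) : ℝ :=
  b * deriv ψ x ^ 2 + k * shearStrain ℓ φ ψ w x ^ 2 + k₀ * axialStrain ℓ φ w x ^ 2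

/-- The elastic energy `b‖ψ_x‖² + k‖φ_x + ψ + ℓw‖² + k₀‖w_x - ℓφ‖²` of a Bresse beam of length `L`,
normalized like `bresseEnergyDensity`. -/
noncomputable def bresseEnergy (k k₀ b ℓ L : ℝ) (φ ψ w : ℝ → ℝ) : ℝ :=
  b * (∫ x in (0 : ℝ)..L, deriv ψ x ^ 2) + k * (∫ x in (0 : ℝ)..L, shearStrain ℓ φ ψ w x ^ 2)
    + k₀ * ∫ x in (0 : ℝ)..L, axialStrain ℓ φ w x ^ 2

/-- `(φ, ψ, w)` is a classical solution of the stationary Bresse system on `[0, L]` with clamped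
ends. The loads `g₁, g₂, g₃` are functions of position only: a state-dependent force `f` enters as
`x ↦ f (φ x) (ψ x) (w x)`. -/
structure IsBresseEquilibrium (k k₀ b ℓ L : ℝ) (g₁ g₂ g₃ φ ψ w : ℝ → ℝ) : Prop where
  contDiff_φ : ContDiff ℝ 2 φ
  contDiff_ψ : ContDiff ℝ 2 ψ
  contDiff_w : ContDiff ℝ 2 w
  φ_zero : φ 0 = 0
  φ_length : φ L = 0
  ψ_zero : ψ 0 = 0
  ψ_length : ψ L = 0
  w_zero : w 0 = 0
  w_length : w L = 0
  balance : ∀ x ∈ Icc 0 L,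
    -(k * deriv (shearStrain ℓ φ ψ w) x) - k₀ * ℓ * axialStrain ℓ φ w x + g₁ x = 0 ∧
    -(b * deriv (deriv ψ) x) + k * shearStrain ℓ φ ψ w x + g₂ x = 0 ∧
    -(k₀ * deriv (axialStrain ℓ φ w) x) + k * ℓ * shearStrain ℓ φ ψ w x + g₃ x = 0

/-- The work flux `k(φ_x + ψ + ℓw)φ + bψ_xψ + k₀(w_x - ℓφ)w`: the boundary term produced by testing
the stationary Bresse system with its own solution and integrating by parts. -/
noncomputable def workFlux (k k₀ b ℓ : ℝ) (φ ψ w : ℝ → ℝ) (x : ℝ) : ℝ :=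
  k * (shearStrain ℓ φ ψ w x * φ x) + b * (deriv ψ x * ψ x) + k₀ * (axialStrain ℓ φ w x * w x)

lemma contDiff_shearStrain {n : WithTop ℕ∞} {ℓ : ℝ} {φ ψ w : ℝ → ℝ}
    (hφ : ContDiff ℝ (n + 1) φ) (hψ : ContDiff ℝ n ψ) (hw : ContDiff ℝ n w) :
    ContDiff ℝ n (shearStrain ℓ φ ψ w) :=
  (hφ.deriv'.add hψ).add (contDiff_const.mul hw)

lemma contDiff_axialStrain {n : WithTop ℕ∞} {ℓ : ℝ} {φ w : ℝ → ℝ}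
    (hφ : ContDiff ℝ n φ) (hw : ContDiff ℝ (n + 1) w) :
    ContDiff ℝ n (axialStrain ℓ φ w) :=
  hw.deriv'.sub (contDiff_const.mul hφ)

lemma continuous_shearStrain {ℓ : ℝ} {φ ψ w : ℝ → ℝ}
    (hφ : ContDiff ℝ 1 φ) (hψ : Continuous ψ) (hw : Continuous w) :
    Continuous (shearStrain ℓ φ ψ w) :=
  ((hφ.continuous_deriv le_rfl).add hψ).add (continuous_const.mul hw)

lemma continuous_axialStrain {ℓ : ℝ} {φ w : ℝ → ℝ} (hφ : Continuous φ) (hw : ContDiff ℝ 1 w) :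
    Continuous (axialStrain ℓ φ w) :=
  (hw.continuous_deriv le_rfl).sub (continuous_const.mul hφ)

lemma contDiff_workFlux {n : WithTop ℕ∞} {k k₀ b ℓ : ℝ} {φ ψ w : ℝ → ℝ}
    (hφ : ContDiff ℝ (n + 1) φ) (hψ : ContDiff ℝ (n + 1) ψ) (hw : ContDiff ℝ (n + 1) w) :
    ContDiff ℝ n (workFlux k k₀ b ℓ φ ψ w) := by
  have hφ₀ : ContDiff ℝ n φ := hφ.of_le le_self_add
  have hψ₀ : ContDiff ℝ n ψ := hψ.of_le le_self_add
  have hw₀ : ContDiff ℝ n w := hw.of_le le_self_add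
  exact ((contDiff_const.mul ((contDiff_shearStrain hφ hψ₀ hw₀).mul hφ₀)).add
    (contDiff_const.mul (hψ.deriv'.mul hψ₀))).add
    (contDiff_const.mul ((contDiff_axialStrain hφ₀ hw).mul hw₀))

lemma continuous_bresseEnergyDensity {k k₀ b ℓ : ℝ} {φ ψ w : ℝ → ℝ}
    (hφ : ContDiff ℝ 1 φ) (hψ : ContDiff ℝ 1 ψ) (hw : ContDiff ℝ 1 w) :
    Continuous (bresseEnergyDensity k k₀ b ℓ φ ψ w) :=
  ((continuous_const.mul ((hψ.continuous_deriv le_rfl).pow 2)).add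
    (continuous_const.mul ((continuous_shearStrain hφ hψ.continuous hw.continuous).pow 2))).add
    (continuous_const.mul ((continuous_axialStrain hφ.continuous hw).pow 2))

lemma bresseEnergy_eq_integral {k k₀ b ℓ L : ℝ} {φ ψ w : ℝ → ℝ}
    (hφ : ContDiff ℝ 1 φ) (hψ : ContDiff ℝ 1 ψ) (hw : ContDiff ℝ 1 w) :
    bresseEnergy k k₀ b ℓ L φ ψ w = ∫ x in (0 : ℝ)..L, bresseEnergyDensity k k₀ b ℓ φ ψ w x := by
  have const_mul_sq_integrable {u : ℝ → ℝ} (hu : Continuous u) (c : ℝ) :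
      IntervalIntegrable (fun x => c * u x ^ 2) volume 0 L :=
    (continuous_const.mul (hu.pow 2)).intervalIntegrable 0 L
  unfold bresseEnergy bresseEnergyDensity
  rw [integral_add_add (const_mul_sq_integrable (hψ.continuous_deriv le_rfl) b)
      (const_mul_sq_integrable (continuous_shearStrain hφ hψ.continuous hw.continuous) k)
      (const_mul_sq_integrable (continuous_axialStrain hφ.continuous hw) k₀),
    intervalIntegral.integral_const_mul, intervalIntegral.integral_const_mul,
    intervalIntegral.integral_const_mul]

namespace IsBresseEquilibrium

variable {k k₀ b ℓ L : ℝ} {g₁ g₂ g₃ φ ψ w : ℝ → ℝ}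

lemma deriv_workFlux (h : IsBresseEquilibrium k k₀ b ℓ L g₁ g₂ g₃ φ ψ w) {x : ℝ}
    (hx : x ∈ Icc 0 L) :
    deriv (workFlux k k₀ b ℓ φ ψ w) x =
      bresseEnergyDensity k k₀ b ℓ φ ψ w x + (g₁ x * φ x + g₂ x * ψ x + g₃ x * w x) := by
  have hφ : ContDiff ℝ 1 φ := h.contDiff_φ.of_le one_le_two
  have hψ : ContDiff ℝ 1 ψ := h.contDiff_ψ.of_le one_le_two
  have hw : ContDiff ℝ 1 w := h.contDiff_w.of_le one_le_two
  have hasDerivAt_of_contDiff {u : ℝ → ℝ} (hu : ContDiff ℝ 1 u) : HasDerivAt u (deriv u x) x :=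
    (hu.differentiable one_ne_zero x).hasDerivAt
  have hS := hasDerivAt_of_contDiff (contDiff_shearStrain (ℓ := ℓ) h.contDiff_φ hψ hw)
  have hψ' := hasDerivAt_of_contDiff (h.contDiff_ψ.deriv' (n := 1))
  have hT := hasDerivAt_of_contDiff (contDiff_axialStrain (ℓ := ℓ) hφ h.contDiff_w)
  have product_rule := ((((hS.mul (hasDerivAt_of_contDiff hφ)).const_mul k).add
    ((hψ'.mul (hasDerivAt_of_contDiff hψ)).const_mul b)).add
    ((hT.mul (hasDerivAt_of_contDiff hw)).const_mul k₀)).deriv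
  have deriv_φ : deriv φ x = shearStrain ℓ φ ψ w x - ψ x - ℓ * w x := by
    rw [shearStrain]; ring
  have deriv_w : deriv w x = axialStrain ℓ φ w x + ℓ * φ x := by
    rw [axialStrain]; ring
  obtain ⟨shear_balance, moment_balance, axial_balance⟩ := h.balance x hx
  refine product_rule.trans ?_
  rw [bresseEnergyDensity, deriv_φ, deriv_w]
  linear_combination
    -(φ x) * shear_balance - ψ x * moment_balance - w x * axial_balance

lemma integral_deriv_workFlux (h : IsBresseEquilibrium k k₀ b ℓ L g₁ g₂ g₃ φ ψ w) :
    ∫ x in (0 : ℝ)..L, deriv (workFlux k k₀ b ℓ φ ψ w) x = 0 := by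
  have hW : ContDiff ℝ 1 (workFlux k k₀ b ℓ φ ψ w) :=
    contDiff_workFlux h.contDiff_φ h.contDiff_ψ h.contDiff_w
  rw [hW.contDiffOn.absolutelyContinuousOnInterval.integral_deriv_eq_sub]
  simp [workFlux, h.φ_zero, h.φ_length, h.ψ_zero, h.ψ_length, h.w_zero, h.w_length]

theorem bresseEnergy_le_integral (h : IsBresseEquilibrium k k₀ b ℓ L g₁ g₂ g₃ φ ψ w) (hL : 0 ≤ L)
    {B : ℝ → ℝ} (hB : IntervalIntegrable B volume 0 L)
    (hgB : ∀ x ∈ Icc 0 L, -(g₁ x * φ x + g₂ x * ψ x + g₃ x * w x) ≤ B x) :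
    bresseEnergy k k₀ b ℓ L φ ψ w ≤ ∫ x in (0 : ℝ)..L, B x := by
  have hφ : ContDiff ℝ 1 φ := h.contDiff_φ.of_le one_le_two
  have hψ : ContDiff ℝ 1 ψ := h.contDiff_ψ.of_le one_le_two
  have hw : ContDiff ℝ 1 w := h.contDiff_w.of_le one_le_two
  have density_integrable :
      IntervalIntegrable (bresseEnergyDensity k k₀ b ℓ φ ψ w) volume 0 L :=
    (continuous_bresseEnergyDensity hφ hψ hw).intervalIntegrable 0 L
  have flux_integrable : IntervalIntegrable (deriv (workFlux k k₀ b ℓ φ ψ w)) volume 0 L :=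
    ((contDiff_workFlux (n := 1) h.contDiff_φ h.contDiff_ψ h.contDiff_w).continuous_deriv
      le_rfl).intervalIntegrable 0 L
  calc bresseEnergy k k₀ b ℓ L φ ψ w
      = ∫ x in (0 : ℝ)..L,
          (bresseEnergyDensity k k₀ b ℓ φ ψ w x - deriv (workFlux k k₀ b ℓ φ ψ w) x) := by
        rw [intervalIntegral.integral_sub density_integrable flux_integrable,
          h.integral_deriv_workFlux, sub_zero, bresseEnergy_eq_integral hφ hψ hw]
    _ ≤ ∫ x in (0 : ℝ)..L, B x := by
        refine intervalIntegral.integral_mono_on hL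
          (density_integrable.sub flux_integrable) hB fun x hx => ?_
        rw [h.deriv_workFlux hx]
        linarith [hgB x hx]

theorem bresseEnergy_le (h : IsBresseEquilibrium k k₀ b ℓ L g₁ g₂ g₃ φ ψ w) (hL : 0 ≤ L)
    {a c : ℝ} (ha : 0 ≤ a)
    (hg : ∀ x ∈ Icc 0 L,
      -a * (φ x ^ 2 + ψ x ^ 2 + w x ^ 2) - c ≤ g₁ x * φ x + g₂ x * ψ x + g₃ x * w x) :
    bresseEnergy k k₀ b ℓ L φ ψ w ≤
      a * ((L / Real.pi) ^ 2 * ∫ x in (0 : ℝ)..L, (deriv φ x ^ 2 + deriv ψ x ^ 2 + deriv w x ^ 2))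
        + c * L := by
  have hφ : ContDiff ℝ 1 φ := h.contDiff_φ.of_le one_le_two
  have hψ : ContDiff ℝ 1 ψ := h.contDiff_ψ.of_le one_le_two
  have hw : ContDiff ℝ 1 w := h.contDiff_w.of_le one_le_two
  have sq_integrable : IntervalIntegrable (fun x => φ x ^ 2 + ψ x ^ 2 + w x ^ 2) volume 0 L :=
    (((hφ.continuous.pow 2).add (hψ.continuous.pow 2)).add
      (hw.continuous.pow 2)).intervalIntegrable 0 L
  have const_integrable : IntervalIntegrable (fun _ => c) volume 0 L :=
    intervalIntegrable_const
  calc bresseEnergy k k₀ b ℓ L φ ψ w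
      ≤ ∫ x in (0 : ℝ)..L, (a * (φ x ^ 2 + ψ x ^ 2 + w x ^ 2) + c) :=
        h.bresseEnergy_le_integral hL ((sq_integrable.const_mul a).add const_integrable)
          fun x hx => by linarith [hg x hx]
    _ = a * (∫ x in (0 : ℝ)..L, (φ x ^ 2 + ψ x ^ 2 + w x ^ 2)) + c * L := by
        rw [intervalIntegral.integral_add (sq_integrable.const_mul a) const_integrable,
          intervalIntegral.integral_const_mul, intervalIntegral.integral_const, smul_eq_mul,
          sub_zero, mul_comm L c]
    _ ≤ _ := by
        gcongr
        simpa using integral_sum_sq_le_integral_sum_deriv_sq hL hφ hψ hw h.φ_zero h.φ_length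
          h.ψ_zero h.ψ_length h.w_zero h.w_length

end IsBresseEquilibrium

theorem stmt_18_general {k k₀ b ℓ L β a c : ℝ} {g₁ g₂ g₃ φ ψ w : ℝ → ℝ}
    (hL : 0 ≤ L) (hβ : 0 ≤ β) (ha : 0 ≤ a)
    (hsol : IsBresseEquilibrium k k₀ b ℓ L g₁ g₂ g₃ φ ψ w)
    (hcoercive : ∫ x in (0 : ℝ)..L, (deriv φ x ^ 2 + deriv ψ x ^ 2 + deriv w x ^ 2)
      ≤ β * bresseEnergy k k₀ b ℓ L φ ψ w)
    (hg : ∀ x ∈ Icc 0 L,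
      -a * (φ x ^ 2 + ψ x ^ 2 + w x ^ 2) - c ≤ g₁ x * φ x + g₂ x * ψ x + g₃ x * w x) :
    (1 - a * β * L ^ 2 / Real.pi ^ 2) *
        ((∫ x in (0 : ℝ)..L, deriv φ x ^ 2) + (∫ x in (0 : ℝ)..L, deriv ψ x ^ 2)
          + ∫ x in (0 : ℝ)..L, deriv w x ^ 2)
      ≤ β * c * L := by
  have deriv_sq_integrable {u : ℝ → ℝ} (hu : ContDiff ℝ 2 u) :
      IntervalIntegrable (fun x => deriv u x ^ 2) volume 0 L :=
    ((hu.continuous_deriv one_le_two).pow 2).intervalIntegrable 0 L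
  rw [← integral_add_add (deriv_sq_integrable hsol.contDiff_φ)
    (deriv_sq_integrable hsol.contDiff_ψ) (deriv_sq_integrable hsol.contDiff_w)]
  have bound := hcoercive.trans (mul_le_mul_of_nonneg_left (hsol.bresseEnergy_le hL ha hg) hβ)
  rw [div_pow] at bound
  linear_combination bound

/-- Boundedness of the stationary set. Let `L, ℓ, k, k₀, b > 0` and
let `β > 0` satisfy the Bresse–Poincaré inequality for all `C¹` triples vanishing
at `0` and `L`. Assume `f₁,f₂,f₃ ∈ C¹(ℝ³)` admit `F ∈ C¹(ℝ³)` with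
`∇F = (f₁,f₂,f₃)` satisfying
`∇F(u,v,w)·(u,v,w) ≥ F(u,v,w) − α(|u|²+|v|²+|w|²) − c_F` and
`F(u,v,w) ≥ −α(|u|²+|v|²+|w|²) − c_F`, with `0 ≤ α < π²/(2βL²)`, `c_F > 0`. Then
every `C²` solution `(φ,ψ,w)` of the stationary Bresse system with Dirichlet
boundary conditions satisfies
`[1 − 2αβL²/π²](∥φ_x∥² + ∥ψ_x∥² + ∥w_x∥²) ≤ 2βc_F L`. -/
theorem stmt_18 (ρ₁ ρ₂ k k₀ b ℓ L β α c_F : ℝ)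
    (hρ₁ : 0 < ρ₁) (hρ₂ : 0 < ρ₂) (hk : 0 < k) (hk₀ : 0 < k₀) (hb : 0 < b)
    (hℓ : 0 < ℓ) (hL : 0 < L) (hβ : 0 < β)
    (hβ' : ∀ φ ψ w : ℝ → ℝ, ContDiff ℝ 1 φ → ContDiff ℝ 1 ψ → ContDiff ℝ 1 w →
      φ 0 = 0 → φ L = 0 → ψ 0 = 0 → ψ L = 0 → w 0 = 0 → w L = 0 →
      (∫ x in (0:ℝ)..L, ((deriv φ x) ^ 2 + (deriv ψ x) ^ 2 + (deriv w x) ^ 2))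
        ≤ β * (b * (∫ x in (0:ℝ)..L, (deriv ψ x) ^ 2)
          + k * (∫ x in (0:ℝ)..L, (deriv φ x + ψ x + ℓ * w x) ^ 2)
          + k₀ * (∫ x in (0:ℝ)..L, (deriv w x - ℓ * φ x) ^ 2)))
    (hα : 0 ≤ α) (hα' : α < Real.pi ^ 2 / (2 * β * L ^ 2)) (hcF : 0 < c_F)
    (f₁ f₂ f₃ : ℝ → ℝ → ℝ → ℝ) (F : ℝ → ℝ → ℝ → ℝ)
    (hf₁ : Continuous fun z : ℝ × ℝ × ℝ => f₁ z.1 z.2.1 z.2.2)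
    (hf₂ : Continuous fun z : ℝ × ℝ × ℝ => f₂ z.1 z.2.1 z.2.2)
    (hf₃ : Continuous fun z : ℝ × ℝ × ℝ => f₃ z.1 z.2.1 z.2.2)
    (hgrad : ∀ u v w' : ℝ,
      HasDerivAt (fun s => F s v w') (f₁ u v w') u ∧
      HasDerivAt (fun s => F u s w') (f₂ u v w') v ∧
      HasDerivAt (fun s => F u v s) (f₃ u v w') w')
    (hFdissip : ∀ u v w' : ℝ,
      f₁ u v w' * u + f₂ u v w' * v + f₃ u v w' * w'
        ≥ F u v w' - α * (|u| ^ 2 + |v| ^ 2 + |w'| ^ 2) - c_F)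
    (hFlow : ∀ u v w' : ℝ,
      F u v w' ≥ -α * (|u| ^ 2 + |v| ^ 2 + |w'| ^ 2) - c_F) :
    ∀ φ ψ w : ℝ → ℝ, ContDiff ℝ 2 φ → ContDiff ℝ 2 ψ → ContDiff ℝ 2 w →
      φ 0 = 0 → φ L = 0 → ψ 0 = 0 → ψ L = 0 → w 0 = 0 → w L = 0 →
      (∀ x ∈ Set.Icc (0:ℝ) L,
        (-(k * deriv (fun y => deriv φ y + ψ y + ℓ * w y) x)
          - k₀ * ℓ * (deriv w x - ℓ * φ x) + f₁ (φ x) (ψ x) (w x) = 0) ∧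
        (-(b * deriv (deriv ψ) x) + k * (deriv φ x + ψ x + ℓ * w x)
          + f₂ (φ x) (ψ x) (w x) = 0) ∧
        (-(k₀ * deriv (fun y => deriv w y - ℓ * φ y) x)
          + k * ℓ * (deriv φ x + ψ x + ℓ * w x) + f₃ (φ x) (ψ x) (w x) = 0)) →
      (1 - 2 * α * β * L ^ 2 / Real.pi ^ 2) *
          ((∫ x in (0:ℝ)..L, (deriv φ x) ^ 2) + (∫ x in (0:ℝ)..L, (deriv ψ x) ^ 2)
            + (∫ x in (0:ℝ)..L, (deriv w x) ^ 2))
        ≤ 2 * β * c_F * L := by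
  intro φ ψ w hφ hψ hw hφ0 hφL hψ0 hψL hw0 hwL hsys
  have hsol : IsBresseEquilibrium k k₀ b ℓ L (fun x => f₁ (φ x) (ψ x) (w x))
      (fun x => f₂ (φ x) (ψ x) (w x)) (fun x => f₃ (φ x) (ψ x) (w x)) φ ψ w :=
    ⟨hφ, hψ, hw, hφ0, hφL, hψ0, hψL, hw0, hwL, hsys⟩
  have hcoercive := hβ' φ ψ w (hφ.of_le one_le_two) (hψ.of_le one_le_two) (hw.of_le one_le_two)
    hφ0 hφL hψ0 hψL hw0 hwL
  refine (stmt_18_general (a := 2 * α) (c := 2 * c_F) hL.le hβ.le (by positivity) hsol hcoercive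
    fun x _ => ?_).trans_eq (by ring)
  have dissipative := hFdissip (φ x) (ψ x) (w x)
  have bounded_below := hFlow (φ x) (ψ x) (w x)
  simp only [sq_abs] at dissipative bounded_below
  linarith
end
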